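/- arXiv:2107.01394 — 7 statements merged into one kernel-verified Lean document; each statement's English description precedes it below -/
import Mathlib

section
/- Let α, β ≥ 0 with α ≠ β, and let F₁ : (0,∞)² → (0,∞)² be given by F₁(x,y) = (y(1+βxy)/(1+αxy), x(1+αxy)/(1+βxy)). Let X and Y be (0,∞)-valued independent random variables with twice-differentiable densities that are strictly positive throughout (0,∞), and set (U,V) := F₁(X,Y). Then U and V are independent if and only if there exist λ ∈ ℝ and c₁, c₂ > 0 such that X ~ GIG(λ, c₁α, c₂) and Y ~ GIG(λ, c₂β, c₁). -/
open MeasureTheory ProbabilityTheory Set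

/-- The (unnormalized-then-normalized) density of the generalized inverse Gaussian
distribution GIG(l, c1, c2): proportional to `x^(l-1) * exp(-c1*x - c2/x)` on `(0,∞)`. -/
noncomputable def gigPdf (l c1 c2 : ℝ) : ℝ → ℝ := fun x =>
  if 0 < x then
    x ^ (l - 1) * Real.exp (-(c1 * x) - c2 / x) /
      (∫ t in Set.Ioi (0 : ℝ), t ^ (l - 1) * Real.exp (-(c1 * t) - c2 / t))
  else 0

/-- The transformation F₁ with parameters α, β. -/
noncomputable def F1 (α β : ℝ) : ℝ × ℝ → ℝ × ℝ := fun p =>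
  (p.2 * (1 + β * p.1 * p.2) / (1 + α * p.1 * p.2),
   p.1 * (1 + α * p.1 * p.2) / (1 + β * p.1 * p.2))

lemma F1_invol (α β : ℝ) (hα : 0 ≤ α) (hβ : 0 ≤ β) (p : ℝ × ℝ)
    (hp : p ∈ Ioi (0:ℝ) ×ˢ Ioi (0:ℝ)) : F1 α β (F1 α β p) = p := by
  obtain ⟨x, y⟩ := p
  obtain ⟨hx, hy⟩ := hp
  simp only [mem_Ioi] at hx hy
  have h1 : 0 < 1 + α * x * y := by positivity
  have h2 : 0 < 1 + β * x * y := by positivity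
  have hz : (y * (1 + β * x * y) / (1 + α * x * y)) * (x * (1 + α * x * y) / (1 + β * x * y))
     = x * y := by field_simp
  simp only [F1, mul_assoc α, mul_assoc β] at *
  rw [hz]
  ext <;> simp <;> field_simp

lemma F1_mem (α β : ℝ) (hα : 0 ≤ α) (hβ : 0 ≤ β) (p : ℝ × ℝ)
    (hp : p ∈ Ioi (0:ℝ) ×ˢ Ioi (0:ℝ)) : F1 α β p ∈ Ioi (0:ℝ) ×ˢ Ioi (0:ℝ) := by
  obtain ⟨x, y⟩ := p
  obtain ⟨hx, hy⟩ := hp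
  simp only [mem_Ioi] at hx hy
  refine ⟨?_, ?_⟩ <;> simp only [F1, mem_Ioi] <;> positivity

lemma F1_deriv (α β : ℝ) (hα : 0 ≤ α) (hβ : 0 ≤ β) (p : ℝ × ℝ)
    (hp : p ∈ Ioi (0:ℝ) ×ˢ Ioi (0:ℝ)) : 
    ∃ F' : ℝ × ℝ →L[ℝ] ℝ × ℝ, HasFDerivAt (F1 α β) F' p ∧ F'.det = -1 := by
  obtain ⟨x, y⟩ := p
  obtain ⟨hx, hy⟩ := hp
  simp only [mem_Ioi] at hx hy
  have h1 : 0 < 1 + α * x * y := by positivity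
  have h2 : 0 < 1 + β * x * y := by positivity
  have d1 : HasFDerivAt (fun p : ℝ × ℝ => p.1) (ContinuousLinearMap.fst ℝ ℝ ℝ) (x, y) := hasFDerivAt_fst
  have d2 : HasFDerivAt (fun p : ℝ × ℝ => p.2) (ContinuousLinearMap.snd ℝ ℝ ℝ) (x, y) := hasFDerivAt_snd
  have da := ((d1.const_mul α).mul d2).const_add 1
  have db := ((d1.const_mul β).mul d2).const_add 1
  have e1 := (d2.mul db).mul ((hasDerivAt_inv h1.ne').comp_hasFDerivAt (x, y) da)
  have e2 := (d1.mul da).mul ((hasDerivAt_inv h2.ne').comp_hasFDerivAt (x, y) db)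
  refine ⟨_, e1.prodMk e2, ?_⟩
  rw [ContinuousLinearMap.det, ← LinearMap.det_toMatrix (Module.Basis.finTwoProd ℝ), Matrix.det_fin_two]
  simp [LinearMap.toMatrix_apply]
  field_simp
  ring

lemma F1_meas (α β : ℝ) : Measurable (F1 α β) := by
  unfold F1; fun_prop

lemma F1_mp (α β : ℝ) (hα : 0 ≤ α) (hβ : 0 ≤ β) :
    MeasurePreserving (F1 α β) ((volume.restrict (Ioi (0:ℝ))).prod (volume.restrict (Ioi (0:ℝ))))
     ((volume.restrict (Ioi (0:ℝ))).prod (volume.restrict (Ioi (0:ℝ)))) := by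
  refine ⟨F1_meas α β, ?_⟩
  rw [Measure.prod_restrict]
  have hQ : MeasurableSet (Ioi (0:ℝ) ×ˢ Ioi (0:ℝ)) := measurableSet_Ioi.prod measurableSet_Ioi
  choose! F' hF hd using F1_deriv α β hα hβ
  have hinj : InjOn (F1 α β) (Ioi (0:ℝ) ×ˢ Ioi (0:ℝ)) := fun p hp q hq h => by
    rw [← F1_invol α β hα hβ p hp, h, F1_invol α β hα hβ q hq]
  have him : F1 α β '' (Ioi (0:ℝ) ×ˢ Ioi (0:ℝ)) = Ioi (0:ℝ) ×ˢ Ioi (0:ℝ) := by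
    ext p; constructor
    · rintro ⟨q, hq, rfl⟩; exact F1_mem α β hα hβ q hq
    · intro hp; exact ⟨_, F1_mem α β hα hβ p hp, F1_invol α β hα hβ p hp⟩
  have := map_withDensity_abs_det_fderiv_eq_addHaar (volume : Measure (ℝ × ℝ)) hQ.nullMeasurableSet
    (fun x hx => (hF x hx).hasFDerivWithinAt) hinj
  rw [him] at this
  rw [← Measure.volume_eq_prod]
  rw [← this]
  congr 1
  rw [this]
  conv_lhs => rw [← withDensity_one (μ := volume.restrict (Ioi (0:ℝ) ×ˢ Ioi (0:ℝ)))]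
  apply withDensity_congr_ae
  filter_upwards [ae_restrict_mem hQ] with p hp
  simp [hd p hp]

/-- unnormalized weight -/
noncomputable def gw (l d1 d2 x : ℝ) : ℝ := x ^ (l - 1) * Real.exp (-(d1 * x) - d2 / x)

lemma gw_pos (l d1 d2 x : ℝ) (hx : 0 < x) : 0 < gw l d1 d2 x := by unfold gw; positivity

lemma gw_zero (l d1 d2 : ℝ) (h : IntegrableOn (gw l d1 d2) (Ioi 0)) : 0 < d2 ∨ (d2 = 0 ∧ 0 < l) := by
  by_contra hcon
  have hlow : ∃ c : ℝ, 0 < c ∧ ∀ x ∈ Ioo (0:ℝ) 1, c ≤ x ^ l * Real.exp (- d2 / x) := by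
    rcases lt_trichotomy d2 0 with h2 | h2 | h2
    · obtain ⟨n, hn⟩ := exists_nat_ge l
      refine ⟨(-d2) ^ n / n.factorial, by have : 0 < -d2 := by linarith
                                          positivity, fun x hx => ?_⟩
      have hx0 := hx.1
      have e1 : x ^ (n:ℝ) ≤ x ^ l := Real.rpow_le_rpow_of_exponent_ge hx.1 hx.2.le hn
      rw [Real.rpow_natCast] at e1
      have e2 := Real.pow_div_factorial_le_exp (-d2 / x) (div_nonneg (by linarith) hx.1.le) n
      calc (-d2) ^ n / n.factorial = x ^ n * ((-d2 / x) ^ n / n.factorial) := by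
            rw [div_pow]; field_simp
        _ ≤ _ := by
            have : 0 ≤ -d2 / x := div_nonneg (by linarith) hx0.le
            gcongr
    · refine ⟨1, one_pos, fun x hx => ?_⟩
      have hl : l ≤ 0 := by
        by_contra hl; exact hcon (Or.inr ⟨h2, not_le.1 hl⟩)
      simpa [h2] using Real.one_le_rpow_of_pos_of_le_one_of_nonpos hx.1 hx.2.le hl
    · exact absurd (Or.inl h2) hcon
  obtain ⟨c, hc, hlow⟩ := hlow
  have h1 : IntegrableOn (gw l d1 d2) (Ioo 0 1) := h.mono_set Ioo_subset_Ioi_self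
  have h2 : IntegrableOn (fun x : ℝ => x⁻¹) (Ioo 0 1) := by
    refine Integrable.mono' (h1.const_mul (c * Real.exp (-|d1|))⁻¹) (by fun_prop) ?_
    filter_upwards [ae_restrict_mem measurableSet_Ioo] with x hx
    have hx0 := hx.1
    rw [Real.norm_of_nonneg (inv_pos.2 hx.1).le, inv_mul_eq_div, le_div_iff₀ (by positivity)]
    have e3 : Real.exp (-|d1|) ≤ Real.exp (-(d1 * x)) := by
      apply Real.exp_le_exp.2
      have : d1 * x ≤ |d1| * 1 := by
        have := le_abs_self d1
        have h3 := hx.2.le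
        have h4 := abs_nonneg d1
        calc d1 * x ≤ |d1| * x := by gcongr
          _ ≤ _ := by gcongr
      linarith
    calc x⁻¹ * (c * Real.exp (-|d1|)) ≤ x⁻¹ * ((x ^ l * Real.exp (- d2 / x)) * Real.exp (-(d1 * x))) := by
          have := hlow x hx
          gcongr
      _ = gw l d1 d2 x := by
          unfold gw
          rw [Real.rpow_sub_one hx0.ne', sub_eq_add_neg, Real.exp_add, neg_div]
          field_simp
  rw [← intervalIntegrable_iff_integrableOn_Ioo_of_le zero_le_one, intervalIntegrable_inv_iff] at h2
  simp at h2

lemma gw_inf (l d1 d2 : ℝ) (h : IntegrableOn (gw l d1 d2) (Ioi 0)) : 0 < d1 ∨ (d1 = 0 ∧ l < 0) := by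
  have := (integrableOn_Ioi_comp_rpow_iff (gw l d1 d2) (p := -1) (by norm_num)).2 h
  have h2 : IntegrableOn (gw (-l) d2 d1) (Ioi 0) := by
    refine this.congr_fun (fun x hx => ?_) measurableSet_Ioi
    have hx : 0 < x := hx
    simp only [gw, smul_eq_mul, Real.rpow_neg_one]
    rw [Real.inv_rpow hx.le, ← Real.rpow_neg hx.le, abs_neg, abs_one, one_mul, ← mul_assoc, ← Real.rpow_add hx]
    congr 2
    · ring
    · field_simp
      ring
  rcases gw_zero _ _ _ h2 with h | ⟨h, h'⟩
  · exact Or.inl h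
  · exact Or.inr ⟨h, by linarith⟩

lemma law_restrict {μ : Measure ℝ} {f : ℝ → ENNReal} (hμ : μ = volume.withDensity f)
    (h0 : ∀ᵐ x ∂μ, 0 < x) : μ = (volume.restrict (Ioi 0)).withDensity f := by
  have : μ.restrict (Ioi 0) = μ := Measure.restrict_eq_self_of_ae_mem h0
  rw [← this, hμ, restrict_withDensity measurableSet_Ioi]

lemma gig_law (l d1 d2 : ℝ) : volume.withDensity (fun x => ENNReal.ofReal (gigPdf l d1 d2 x))
    = (volume.restrict (Ioi 0)).withDensity (fun x => ENNReal.ofReal (gw l d1 d2 x / ∫ t in Set.Ioi (0 : ℝ), gw l d1 d2 t)) := by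
  rw [← withDensity_indicator measurableSet_Ioi]
  congr 1
  funext x
  by_cases hx : 0 < x <;> simp [indicator, gigPdf, gw, hx]

lemma law_gig {μ : Measure ℝ} [IsProbabilityMeasure μ] {f : ℝ → ℝ}
    (hμ : μ = volume.withDensity (fun x => ENNReal.ofReal (f x)))
    (h0 : ∀ᵐ x ∂μ, 0 < x) (C l d1 d2 : ℝ) (hC : 0 < C) (hf : ∀ x, 0 < x → f x = C * gw l d1 d2 x) :
    IntegrableOn (gw l d1 d2) (Ioi 0) ∧ 
      μ = volume.withDensity (fun x => ENNReal.ofReal (gigPdf l d1 d2 x)) := by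
  have h1 := law_restrict hμ h0
  have h2 : μ = (volume.restrict (Ioi 0)).withDensity (fun x => ENNReal.ofReal (C * gw l d1 d2 x)) := by
    rw [h1]
    apply withDensity_congr_ae
    filter_upwards [ae_restrict_mem measurableSet_Ioi] with x hx
    rw [hf x hx]
  have hm : Measurable (gw l d1 d2) := by unfold gw; fun_prop
  have h3 : ∫⁻ x in Ioi 0, ENNReal.ofReal (C * gw l d1 d2 x) = 1 := by
    have : μ univ = 1 := measure_univ
    rwa [h2, withDensity_apply _ MeasurableSet.univ, Measure.restrict_univ] at this
  have hnn : 0 ≤ᵐ[volume.restrict (Ioi 0)] fun x => C * gw l d1 d2 x := by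
    filter_upwards [ae_restrict_mem measurableSet_Ioi] with x hx
    have := gw_pos l d1 d2 x hx
    simp only [Pi.zero_apply]; positivity
  have hi : IntegrableOn (fun x => C * gw l d1 d2 x) (Ioi 0) := by
    refine ⟨by fun_prop, ?_⟩
    rw [hasFiniteIntegral_iff_ofReal hnn, h3]; simp
  have hi2 : IntegrableOn (gw l d1 d2) (Ioi 0) := by
    have := hi.const_mul C⁻¹
    refine this.congr (Filter.Eventually.of_forall fun x => ?_)
    simp only; field_simp
  refine ⟨hi2, ?_⟩
  have h4 := ofReal_integral_eq_lintegral_ofReal hi hnn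
  rw [h3, integral_const_mul, ENNReal.ofReal_eq_one] at h4
  rw [gig_law, h2]
  congr 1
  funext x
  rw [div_eq_mul_inv, eq_inv_of_mul_eq_one_left h4, mul_comm]

lemma law_UV (α β : ℝ) (hα : 0 ≤ α) (hβ : 0 ≤ β) {f g : ℝ → ENNReal} (hf : Measurable f) (hg : Measurable g) :
    Measure.map (F1 α β) (((volume.restrict (Ioi (0:ℝ))).withDensity f).prod ((volume.restrict (Ioi (0:ℝ))).withDensity g))
     = ((volume.restrict (Ioi (0:ℝ))).prod (volume.restrict (Ioi (0:ℝ)))).withDensity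
      (fun p => f (F1 α β p).1 * g (F1 α β p).2) := by
  rw [prod_withDensity hf hg]
  have hF := F1_meas α β
  have hh : Measurable (fun p => f (F1 α β p).1 * g (F1 α β p).2) := by fun_prop
  ext S hS
  rw [Measure.map_apply hF hS, withDensity_apply _ (hF hS), withDensity_apply _ hS,
    ← (F1_mp α β hα hβ).setLIntegral_comp_preimage hS hh]
  apply setLIntegral_congr_fun_ae (hF hS)
  rw [Measure.prod_restrict]
  filter_upwards [ae_restrict_mem (measurableSet_Ioi.prod measurableSet_Ioi)] with p hp _
  rw [F1_invol α β hα hβ p hp]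

lemma indep_of_prod {Ω : Type*} [MeasureSpace Ω] [IsProbabilityMeasure (ℙ : Measure Ω)] {U V : Ω → ℝ}
    (hU : Measurable U) (hV : Measurable V) (μ1 μ2 : Measure ℝ) [SFinite μ1] [SFinite μ2]
    (h : Measure.map (fun ω => (U ω, V ω)) ℙ = μ1.prod μ2) : IndepFun U V ℙ := by
  rw [indepFun_iff_measure_inter_preimage_eq_mul]
  have key : ∀ S T, MeasurableSet S → MeasurableSet T → ℙ (U ⁻¹' S ∩ V ⁻¹' T) = μ1 S * μ2 T := by
    intro S T hS hT
    rw [← Measure.prod_prod, ← h, Measure.map_apply (by fun_prop) (hS.prod hT)]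
    rfl
  intro S T hS hT
  have k1 := key S univ hS .univ
  have k2 := key univ T .univ hT
  have k3 := key univ univ .univ .univ
  simp only [preimage_univ, inter_univ, univ_inter, measure_univ] at k1 k2 k3
  rw [key S T hS hT, k1, k2]
  calc μ1 S * μ2 T = (μ1 S * μ2 T) * (μ1 univ * μ2 univ) := by rw [← k3, mul_one]
    _ = _ := by ring

lemma factor {Ω : Type*} [MeasureSpace Ω] [IsProbabilityMeasure (ℙ : Measure Ω)] {U V : Ω → ℝ}
    (hU : Measurable U) (hV : Measurable V) (H : ℝ × ℝ → ENNReal) (hH : Measurable H) (h : ℝ → ℝ → ℝ)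
    (hHh : ∀ u v, 0 < u → 0 < v → H (u, v) = ENNReal.ofReal (h u v))
    (hpos : ∀ u v, 0 < u → 0 < v → 0 < h u v)
    (hc1 : ∀ u, 0 < u → ContinuousOn (fun v => h u v) (Ioi 0))
    (hc2 : ∀ v, 0 < v → ContinuousOn (fun u => h u v) (Ioi 0))
    (hlaw : Measure.map (fun ω => (U ω, V ω)) ℙ = 
      ((volume.restrict (Ioi (0:ℝ))).prod (volume.restrict (Ioi (0:ℝ)))).withDensity H)
    (hind : IndepFun U V ℙ) :
    ∃ u0, 0 < u0 ∧ ∀ u v, 0 < u → 0 < v → h u v * h u0 1 = h u 1 * h u0 v := by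
  set ν : Measure ℝ := volume.restrict (Ioi (0:ℝ)) with hν
  have hprod := (indepFun_iff_map_prod_eq_prod_map_map hU.aemeasurable hV.aemeasurable).1 hind
  have acU : Measure.map U ℙ ≪ ν := by
    have : Measure.map U ℙ = Measure.map Prod.fst (Measure.map (fun ω => (U ω, V ω)) ℙ) := by
      rw [Measure.map_map measurable_fst (by fun_prop)]; rfl
    rw [this, hlaw]
    exact ((withDensity_absolutelyContinuous _ H).map measurable_fst).trans
      Measure.quasiMeasurePreserving_fst.absolutelyContinuous
  have acV : Measure.map V ℙ ≪ ν := by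
    have : Measure.map V ℙ = Measure.map Prod.snd (Measure.map (fun ω => (U ω, V ω)) ℙ) := by
      rw [Measure.map_map measurable_snd (by fun_prop)]; rfl
    rw [this, hlaw]
    exact ((withDensity_absolutelyContinuous _ H).map measurable_snd).trans
      Measure.quasiMeasurePreserving_snd.absolutelyContinuous
  have : IsProbabilityMeasure (Measure.map U ℙ) := Measure.isProbabilityMeasure_map hU.aemeasurable
  have : IsProbabilityMeasure (Measure.map V ℙ) := Measure.isProbabilityMeasure_map hV.aemeasurable
  set φ := (Measure.map U ℙ).rnDeriv ν with hφ
  set ψ := (Measure.map V ℙ).rnDeriv ν with hψ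
  have mφ : Measurable φ := Measure.measurable_rnDeriv _ _
  have mψ : Measurable ψ := Measure.measurable_rnDeriv _ _
  rw [← Measure.withDensity_rnDeriv_eq _ _ acU, ← Measure.withDensity_rnDeriv_eq _ _ acV, ← hφ, ← hψ,
    prod_withDensity mφ mψ, hlaw, withDensity_eq_iff_of_sigmaFinite hH.aemeasurable (by fun_prop)] at hprod
  have hae := Measure.ae_ae_of_ae_prod hprod
  have hmem : ∀ᵐ x ∂ν, x ∈ Ioi (0:ℝ) := ae_restrict_mem measurableSet_Ioi
  have hae2 : ∀ᵐ u ∂ν, 0 < u ∧ ∀ᵐ v ∂ν, 0 < v ∧ h u v = (φ u).toReal * (ψ v).toReal := by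
    filter_upwards [hae, hmem] with u hu hu0
    refine ⟨hu0, ?_⟩
    filter_upwards [hu, hmem] with v hv hv0
    refine ⟨hv0, ?_⟩
    rw [hHh u v hu0 hv0] at hv
    rw [← ENNReal.toReal_mul, ← hv, ENNReal.toReal_ofReal (hpos u v hu0 hv0).le]
  have hν0 : ν ≠ 0 := by
    rw [hν, Ne, Measure.restrict_eq_zero]; simp
  have : (ae ν).NeBot := ae_neBot.2 hν0
  obtain ⟨u0, hu0, hu0'⟩ := hae2.exists
  refine ⟨u0, hu0, ?_⟩
  have hφ0 : (φ u0).toReal ≠ 0 := by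
    obtain ⟨v, hv, hv'⟩ := hu0'.exists
    intro h0
    rw [h0, zero_mul] at hv'
    exact (hpos u0 v hu0 hv).ne' hv'
  have hae3 : ∀ᵐ u ∂ν, ∀ v, 0 < v → h u v * h u0 1 = h u 1 * h u0 v := by
    filter_upwards [hae2] with u ⟨hu, hu'⟩
    have heq : EqOn (fun v => (φ u0).toReal * h u v) (fun v => (φ u).toReal * h u0 v) (Ioi 0) := by
      apply Measure.eqOn_open_of_ae_eq (μ := volume) _ isOpen_Ioi
      · exact continuousOn_const.mul (hc1 u hu)
      · exact continuousOn_const.mul (hc1 u0 hu0)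
      · filter_upwards [hu', hu0'] with v ⟨_, h1⟩ ⟨_, h2⟩
        rw [h1, h2]; ring
    intro v hv
    have e1 := heq (show v ∈ Ioi (0:ℝ) from hv)
    have e2 := heq (show (1:ℝ) ∈ Ioi (0:ℝ) from mem_Ioi.2 one_pos)
    simp only at e1 e2
    apply mul_left_cancel₀ hφ0
    linear_combination h u0 1 * e1 - h u0 v * e2
  intro u v hu hv
  have heq : EqOn (fun u => h u v * h u0 1) (fun u => h u 1 * h u0 v) (Ioi 0) := by
    apply Measure.eqOn_open_of_ae_eq (μ := volume) _ isOpen_Ioi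
    · exact (hc2 v hv).mul continuousOn_const
    · exact (hc2 1 one_pos).mul continuousOn_const
    · filter_upwards [hae3] with u h
      exact h v hv
  exact heq hu

lemma quad_form {A A1 : ℝ → ℝ} (u v w : ℕ → ℝ) (α β : ℝ) (hα : 0 < α) (hβ : 0 < β)
    (h : ∀ p, ∀ j : ℕ, 1 ≤ j → j ≤ 3 → (A1 p + A p) + 2 * β * j * (Real.exp p * A1 p)
      + α * β * j ^ 2 * (Real.exp p ^ 2 * (A1 p - A p)) = u j + v j * Real.exp p + w j * Real.exp p ^ 2) :
    ∃ k s0 s2 : ℝ, ∀ p, A p = k + s2 * Real.exp p - s0 * Real.exp (-p) := by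
  have key : ∃ q0 q1 q2 r0 r1 r2 n0 n1 n2 : ℝ, ∀ p, 
      A1 p + A p = q0 + q1 * Real.exp p + q2 * Real.exp p ^ 2 ∧
      Real.exp p * A1 p = r0 + r1 * Real.exp p + r2 * Real.exp p ^ 2 ∧
      Real.exp p ^ 2 * (A1 p - A p) = n0 + n1 * Real.exp p + n2 * Real.exp p ^ 2 := by
    refine ⟨3 * u 1 - 3 * u 2 + u 3, 3 * v 1 - 3 * v 2 + v 3, 3 * w 1 - 3 * w 2 + w 3,
      (-5 * u 1 + 8 * u 2 - 3 * u 3) / (4 * β), (-5 * v 1 + 8 * v 2 - 3 * v 3) / (4 * β),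
      (-5 * w 1 + 8 * w 2 - 3 * w 3) / (4 * β),
      (u 1 - 2 * u 2 + u 3) / (2 * α * β), (v 1 - 2 * v 2 + v 3) / (2 * α * β),
      (w 1 - 2 * w 2 + w 3) / (2 * α * β), fun p => ?_⟩
    have e1 := h p 1 (by norm_num) (by norm_num)
    have e2 := h p 2 (by norm_num) (by norm_num)
    have e3 := h p 3 (by norm_num) (by norm_num)
    push_cast at e1 e2 e3
    refine ⟨?_, ?_, ?_⟩
    · linear_combination 3 * e1 - 3 * e2 + e3
    · field_simp
      linear_combination -5 * e1 + 8 * e2 - 3 * e3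
    · field_simp
      linear_combination e1 - 2 * e2 + e3
  obtain ⟨q0, q1, q2, r0, r1, r2, n0, n1, n2, hk⟩ := key
  have hx : ∀ x : ℝ, 0 < x → x ^ 2 * (q0 + q1 * x + q2 * x ^ 2) + (n0 + n1 * x + n2 * x ^ 2)
      = 2 * x * (r0 + r1 * x + r2 * x ^ 2) := by
    intro x hx
    have := hk (Real.log x)
    rw [Real.exp_log hx] at this
    obtain ⟨h1, h2, h3⟩ := this
    rw [← h1, ← h2, ← h3]; ring
  have x1 := hx 1 (by norm_num)
  have x2 := hx 2 (by norm_num)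
  have x3 := hx 3 (by norm_num)
  have x4 := hx 4 (by norm_num)
  have x5 := hx 5 (by norm_num)
  have z1 : q2 = 0 := by linarith
  have z2 : n0 = 0 := by linarith
  have z3 : q1 = 2 * r2 := by linarith
  have z4 : n1 = 2 * r0 := by linarith
  have z5 : q0 + n2 = 2 * r1 := by linarith
  have hA2 : ∀ p, A p = (q0 - r1) + r2 * Real.exp p - r0 * Real.exp (-p) := by
    intro p
    obtain ⟨h1, h2, h3⟩ := hk p
    have hp := Real.exp_pos p
    rw [Real.exp_neg]
    field_simp
    subst z1 z3
    linear_combination Real.exp p * h1 - h2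
  exact ⟨_, _, _, hA2⟩

lemma exp_form_deriv {A A1 : ℝ → ℝ} (hA : ∀ p, HasDerivAt A (A1 p) p) {k s0 s2 : ℝ}
    (hA2 : ∀ p, A p = k + s2 * Real.exp p - s0 * Real.exp (-p)) (p : ℝ) :
    A1 p = s2 * Real.exp p + s0 * Real.exp (-p) := by
  have : HasDerivAt A (s2 * Real.exp p + s0 * Real.exp (-p)) p := by
    rw [funext hA2]
    have := (((Real.hasDerivAt_exp p).const_mul s2).const_add k).sub
      (((Real.hasDerivAt_exp (-p)).comp p (hasDerivAt_neg p)).const_mul s0)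
    exact this.congr_deriv (by ring)
  exact (hA p).unique this

lemma solve_beta (α β : ℝ) (hα : 0 ≤ α) (hβ : 0 < β) (A B A1 B1 : ℝ → ℝ)
    (hA : ∀ p, HasDerivAt A (A1 p) p) (hB : ∀ p, HasDerivAt B (B1 p) p)
    (hE : ∀ p q, (1 + 2 * β * (Real.exp p * Real.exp q) + α * β * (Real.exp p * Real.exp q) ^ 2) * A1 p
        + (1 - α * β * (Real.exp p * Real.exp q) ^ 2) * A p
      = (1 + 2 * α * (Real.exp p * Real.exp q) + α * β * (Real.exp p * Real.exp q) ^ 2) * B1 q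
        + (1 - α * β * (Real.exp p * Real.exp q) ^ 2) * B q) :
    ∃ k c1 c2 : ℝ, (∀ p, A p = k - c1 * α * Real.exp p + c2 * Real.exp (-p)) ∧
      ∀ q, B q = k - c2 * β * Real.exp q + c1 * Real.exp (-q) := by
  rcases hα.eq_or_lt with rfl | hα
  · 
    have e1 := fun p => hE p (Real.log 1)
    have e2 := fun p => hE p (Real.log 2)
    simp only [Real.exp_log (show (0:ℝ) < 1 by norm_num), 
      Real.exp_log (show (0:ℝ) < 2 by norm_num)] at e1 e2
    generalize B1 (Real.log 1) = b1 at e1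
    generalize B (Real.log 1) = b2 at e1
    generalize B1 (Real.log 2) = b3 at e2
    generalize B (Real.log 2) = b4 at e2
    have hA2 : ∀ p, A p = (2 * (b1 + b2) - (b3 + b4)) + 0 * Real.exp p - ((b3 + b4 - b1 - b2) / (2 * β)) * Real.exp (-p) := by
      intro p
      have hp := Real.exp_pos p
      rw [Real.exp_neg]
      field_simp
      have := e1 p
      have := e2 p
      linear_combination (1 + 4 * β * Real.exp p) * e1 p - (1 + 2 * β * Real.exp p) * e2 p
    generalize (2 * (b1 + b2) - (b3 + b4)) = k at hA2
    generalize ((b3 + b4 - b1 - b2) / (2 * β)) = s at hA2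
    have hA3 := exp_form_deriv hA hA2
    have hQ : ∀ q, B1 q + B q = k + 2 * β * s * Real.exp q := by
      intro q
      have := hE 0 q
      rw [hA2, hA3] at this
      simp at this
      linarith
    have hc : ∀ q, HasDerivAt (fun q => Real.exp q * B q - k * Real.exp q - β * s * (Real.exp q * Real.exp q)) 0 q := by
      intro q
      have d := Real.hasDerivAt_exp q
      refine (((d.mul (hB q)).sub (d.const_mul k)).sub ((d.mul d).const_mul (β * s))).congr_deriv ?_
      have := hQ q
      linear_combination Real.exp q * this
    have hc2 := fun q => is_const_of_deriv_eq_zero (fun q => (hc q).differentiableAt) (fun q => (hc q).deriv) q 0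
    generalize Real.exp 0 * B 0 - k * Real.exp 0 - β * s * (Real.exp 0 * Real.exp 0) = c at hc2
    refine ⟨k, c, -s, fun p => by rw [hA2]; ring, fun q => ?_⟩
    have hp := Real.exp_pos q
    rw [Real.exp_neg]
    field_simp
    linarith [hc2 q]
  · have hf : ∃ k s0 s2 : ℝ, ∀ p, A p = k + s2 * Real.exp p - s0 * Real.exp (-p) := by
      apply quad_form (A := A) (A1 := A1) (fun j => B1 (Real.log j) + B (Real.log j)) (fun j => 2 * α * j * B1 (Real.log j))
        (fun j => α * β * j ^ 2 * (B1 (Real.log j) - B (Real.log j))) α β hα hβ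
      intro p j hj _
      have := hE p (Real.log j)
      rw [Real.exp_log (by exact_mod_cast hj)] at this
      linear_combination this
    obtain ⟨k, s0, s2, hA2⟩ := hf
    have hA3 := exp_form_deriv hA hA2
    refine ⟨k, - s2 / α, - s0, fun p => by rw [hA2]; field_simp; ring, fun q => ?_⟩
    have hp := Real.exp_pos q
    have e1 := hE (Real.log 1) q
    have e2 := hE (Real.log 2) q
    have e3 := hE (Real.log 3) q
    simp only [hA2, hA3, Real.exp_neg, Real.exp_log (show (0:ℝ) < 1 by norm_num), 
      Real.exp_log (show (0:ℝ) < 2 by norm_num), Real.exp_log (show (0:ℝ) < 3 by norm_num)] at e1 e2 e3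
    rw [Real.exp_neg]
    generalize Real.exp q = y at *
    have f1 : B1 q + B q = k + 2 * β * s0 * y := by
      linear_combination - 3 * e1 + 3 * e2 - e3
    have f2 : α * y * B1 q = s2 + α * β * s0 * y ^ 2 := by
      linear_combination (5 * e1 - 8 * e2 + 3 * e3) / 4
    field_simp
    linear_combination α * y * f1 - f2
    
lemma solve_all (α β : ℝ) (hα : 0 ≤ α) (hβ : 0 ≤ β) (hαβ : α ≠ β) (A B A1 B1 : ℝ → ℝ)
    (hA : ∀ p, HasDerivAt A (A1 p) p) (hB : ∀ p, HasDerivAt B (B1 p) p)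
    (hE : ∀ p q, (1 + 2 * β * (Real.exp p * Real.exp q) + α * β * (Real.exp p * Real.exp q) ^ 2) * A1 p
        + (1 - α * β * (Real.exp p * Real.exp q) ^ 2) * A p
      = (1 + 2 * α * (Real.exp p * Real.exp q) + α * β * (Real.exp p * Real.exp q) ^ 2) * B1 q
        + (1 - α * β * (Real.exp p * Real.exp q) ^ 2) * B q) :
    ∃ k c1 c2 : ℝ, (∀ p, A p = k - c1 * α * Real.exp p + c2 * Real.exp (-p)) ∧
      ∀ q, B q = k - c2 * β * Real.exp q + c1 * Real.exp (-q) := by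
  rcases hβ.eq_or_lt with rfl | hβ'
  · have hα' : 0 < α := lt_of_le_of_ne hα (Ne.symm hαβ)
    obtain ⟨k, c1, c2, h1, h2⟩ := solve_beta 0 α le_rfl hα' B A B1 A1 hB hA (fun p q => by
      linear_combination - hE q p)
    exact ⟨k, c2, c1, h2, h1⟩
  · exact solve_beta α β hα hβ' A B A1 B1 hA hB hE

/-- the shift function -/
noncomputable def gS (α β t : ℝ) : ℝ := Real.log (1 + β * Real.exp t) - Real.log (1 + α * Real.exp t)
noncomputable def gS1 (α β t : ℝ) : ℝ := (β - α) * Real.exp t / ((1 + β * Real.exp t) * (1 + α * Real.exp t))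
noncomputable def gS2 (α β t : ℝ) : ℝ := gS1 α β t * (1 - α * β * Real.exp t ^ 2) / ((1 + β * Real.exp t) * (1 + α * Real.exp t))

lemma gS_deriv (α β : ℝ) (hα : 0 ≤ α) (hβ : 0 ≤ β) (t : ℝ) : HasDerivAt (gS α β) (gS1 α β t) t := by
  have d := Real.hasDerivAt_exp t
  have h0 := Real.exp_pos t
  have h1 : 0 < 1 + α * Real.exp t := by positivity
  have h2 : 0 < 1 + β * Real.exp t := by positivity
  have := (((d.const_mul β).const_add 1).log h2.ne').sub (((d.const_mul α).const_add 1).log h1.ne')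
  refine this.congr_deriv ?_
  unfold gS1
  field_simp
  ring

lemma gS1_deriv (α β : ℝ) (hα : 0 ≤ α) (hβ : 0 ≤ β) (t : ℝ) : HasDerivAt (gS1 α β) (gS2 α β t) t := by
  have d := Real.hasDerivAt_exp t
  have h0 := Real.exp_pos t
  have h1 : 0 < 1 + α * Real.exp t := by positivity
  have h2 : 0 < 1 + β * Real.exp t := by positivity
  have := (d.const_mul (β - α)).div (((d.const_mul β).const_add 1).mul ((d.const_mul α).const_add 1)) 
    (mul_pos h2 h1).ne'
  refine this.congr_deriv ?_
  unfold gS2 gS1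
  simp only [Pi.mul_apply]
  field_simp
  ring

lemma mixed (α β : ℝ) (hα : 0 ≤ α) (hβ : 0 ≤ β) (hαβ : α ≠ β) (a b A B A1 B1 : ℝ → ℝ)
    (ha : ∀ p, HasDerivAt a (A p) p) (hb : ∀ p, HasDerivAt b (B p) p)
    (hA : ∀ p, HasDerivAt A (A1 p) p) (hB : ∀ p, HasDerivAt B (B1 p) p)
    (φ ψ : ℝ → ℝ)
    (hG : ∀ r s, a (s + gS α β (r + s)) + b (r - gS α β (r + s)) = φ r + ψ s) (p q : ℝ) :
    (1 + 2 * β * (Real.exp p * Real.exp q) + α * β * (Real.exp p * Real.exp q) ^ 2) * A1 p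
        + (1 - α * β * (Real.exp p * Real.exp q) ^ 2) * A p
      = (1 + 2 * α * (Real.exp p * Real.exp q) + α * β * (Real.exp p * Real.exp q) ^ 2) * B1 q
        + (1 - α * β * (Real.exp p * Real.exp q) ^ 2) * B q := by
  have gr : ∀ r s, HasDerivAt (fun r => gS α β (r + s)) (gS1 α β (r + s)) r := fun r s =>
    (gS_deriv α β hα hβ (r + s)).comp_add_const r s
  have gs : ∀ r s, HasDerivAt (fun s => gS α β (r + s)) (gS1 α β (r + s)) s := fun r s =>
    (gS_deriv α β hα hβ (r + s)).comp_const_add r s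
  have g1s : ∀ r s, HasDerivAt (fun s => gS1 α β (r + s)) (gS2 α β (r + s)) s := fun r s =>
    (gS1_deriv α β hα hβ (r + s)).comp_const_add r s
  have D1 : ∀ r s, HasDerivAt (fun r => φ r + ψ s)
    (A (s + gS α β (r + s)) * gS1 α β (r + s) + B (r - gS α β (r + s)) * (1 - gS1 α β (r + s))) r := by
    intro r s
    rw [← funext (fun r => hG r s)]
    exact ((ha _).comp r ((gr r s).const_add s)).add ((hb _).comp r ((hasDerivAt_id r).sub (gr r s)))
  have D2 : ∀ r s s', A (s + gS α β (r + s)) * gS1 α β (r + s) + B (r - gS α β (r + s)) * (1 - gS1 α β (r + s))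
     = A (s' + gS α β (r + s')) * gS1 α β (r + s') + B (r - gS α β (r + s')) * (1 - gS1 α β (r + s')) := by
    intro r s s'
    have h1 := (D1 r s).add_const (-ψ s)
    have h2 := (D1 r s').add_const (-ψ s')
    simp only [add_neg_cancel_right] at h1 h2
    exact h1.unique h2
  set s : ℝ := p - gS α β (p + q) with hs
  set r : ℝ := q + gS α β (p + q) with hr
  have hrs : r + s = p + q := by rw [hs, hr]; ring
  have h3 := (((hA (s + gS α β (r + s))).comp s ((hasDerivAt_id s).add (gs r s))).mul (g1s r s)).add
    (((hB (r - gS α β (r + s))).comp s ((gs r s).const_sub r)).mul ((g1s r s).const_sub 1))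
  have h4 : HasDerivAt (fun s => A (s + gS α β (r + s)) * gS1 α β (r + s) + B (r - gS α β (r + s)) * (1 - gS1 α β (r + s))) 0 s := by
    have := hasDerivAt_const s (A (0 + gS α β (r + 0)) * gS1 α β (r + 0) + B (r - gS α β (r + 0)) * (1 - gS1 α β (r + 0)))
    refine this.congr_of_eventuallyEq (Filter.Eventually.of_forall fun s => ?_)
    exact D2 r s 0
  have h5 := h3.unique h4
  have hp : s + gS α β (p + q) = p := by rw [hs]; ring
  have hq : r - gS α β (p + q) = q := by rw [hr]; ring
  simp only [Function.comp, hp, hq, hrs, id, Pi.add_apply] at h5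
  simp only [gS2, gS1, Real.exp_add] at h5
  have hz : 0 < Real.exp p * Real.exp q := by positivity
  generalize Real.exp p * Real.exp q = z at *
  have h1 : 0 < 1 + α * z := by positivity
  have h2 : 0 < 1 + β * z := by positivity
  have hba : β - α ≠ 0 := sub_ne_zero.2 hαβ.symm
  field_simp at h5
  apply mul_left_cancel₀ (mul_ne_zero hba hz.ne')
  linear_combination h5

lemma gw_F1 (α β l c1 c2 u v : ℝ) (hα : 0 ≤ α) (hβ : 0 ≤ β) (hu : 0 < u) (hv : 0 < v) :
    gw l (c1 * α) c2 (F1 α β (u, v)).1 * gw l (c2 * β) c1 (F1 α β (u, v)).2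
      = gw l (c2 * α) c1 u * gw l (c1 * β) c2 v := by
  have h1 : 0 < 1 + α * u * v := by positivity
  have h2 : 0 < 1 + β * u * v := by positivity
  have e1 : (F1 α β (u, v)).1 * (F1 α β (u, v)).2 = u * v := by
    simp only [F1]; field_simp
  have hm := F1_mem α β hα hβ (u, v) ⟨hu, hv⟩
  have hm1 : 0 < (F1 α β (u, v)).1 := hm.1
  have hm2 : 0 < (F1 α β (u, v)).2 := hm.2
  unfold gw
  rw [mul_mul_mul_comm, ← Real.mul_rpow hm1.le hm2.le, e1, ← Real.exp_add, 
    mul_mul_mul_comm (u ^ (l - 1)), ← Real.mul_rpow hu.le hv.le, ← Real.exp_add]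
  congr 2
  simp only [F1]
  field_simp
  ring

lemma F1_exp (α β : ℝ) (hα : 0 ≤ α) (hβ : 0 ≤ β) (r s : ℝ) :
    F1 α β (Real.exp r, Real.exp s) = (Real.exp (s + gS α β (r + s)), Real.exp (r - gS α β (r + s))) := by
  have h1 : 0 < 1 + α * Real.exp (r + s) := by positivity
  have h2 : 0 < 1 + β * Real.exp (r + s) := by positivity
  simp only [F1, gS, Real.exp_add, Real.exp_sub, Real.exp_log h1, Real.exp_log h2] at *
  rw [Real.exp_log h1, Real.exp_log h2]
  ext
  · simp; field_simp
  · simp; field_simp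

lemma log_derivs {f : ℝ → ℝ} (hpos : ∀ x ∈ Ioi (0 : ℝ), 0 < f x)
    (hd : ∀ x ∈ Ioi (0 : ℝ), DifferentiableAt ℝ f x ∧ DifferentiableAt ℝ (deriv f) x) :
    ∃ A A1 : ℝ → ℝ, (∀ p, HasDerivAt (fun p => Real.log (f (Real.exp p))) (A p) p) ∧
      ∀ p, HasDerivAt A (A1 p) p := by
  have hd0 : ∀ p, HasDerivAt (fun p => f (Real.exp p)) (deriv f (Real.exp p) * Real.exp p) p := fun p =>
    ((hd _ (Real.exp_pos p)).1.hasDerivAt).comp p (Real.hasDerivAt_exp p)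
  refine ⟨fun p => deriv f (Real.exp p) * Real.exp p / f (Real.exp p), 
    deriv (fun p => deriv f (Real.exp p) * Real.exp p / f (Real.exp p)), 
    fun p => (hd0 p).log (hpos _ (Real.exp_pos p)).ne', fun p => ?_⟩
  have h1 : DifferentiableAt ℝ (fun p => deriv f (Real.exp p)) p :=
    ((hd _ (Real.exp_pos p)).2).comp p Real.differentiableAt_exp
  exact ((h1.mul Real.differentiableAt_exp).div (hd0 p).differentiableAt 
    (hpos _ (Real.exp_pos p)).ne').hasDerivAt

lemma integ_form {f A : ℝ → ℝ} (hpos : ∀ x ∈ Ioi (0 : ℝ), 0 < f x)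
    (hA : ∀ p, HasDerivAt (fun p => Real.log (f (Real.exp p))) (A p) p) (k d1 d2 : ℝ)
    (h : ∀ p, A p = k - d1 * Real.exp p + d2 * Real.exp (-p)) :
    ∃ C, 0 < C ∧ ∀ x, 0 < x → f x = C * gw (k + 1) d1 d2 x := by
  have hc : ∀ p, HasDerivAt (fun p => Real.log (f (Real.exp p)) - (k * p - d1 * Real.exp p - d2 * Real.exp (-p))) 0 p := by
    intro p
    have e := (((hasDerivAt_id p).const_mul k).sub ((Real.hasDerivAt_exp p).const_mul d1)).sub
      (((Real.hasDerivAt_exp (-p)).comp p (hasDerivAt_neg p)).const_mul d2)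
    refine ((hA p).sub e).congr_deriv ?_
    rw [h]; ring
  have hc2 := fun q => is_const_of_deriv_eq_zero (fun q => (hc q).differentiableAt) (fun q => (hc q).deriv) q 0
  generalize Real.log (f (Real.exp 0)) - (k * 0 - d1 * Real.exp 0 - d2 * Real.exp (-0)) = c at hc2
  refine ⟨Real.exp c, Real.exp_pos c, fun x hx => ?_⟩
  have := hc2 (Real.log x)
  rw [Real.exp_neg, Real.exp_log hx] at this
  rw [← Real.exp_log (hpos x hx), gw, add_sub_cancel_right, Real.rpow_def_of_pos hx, ← Real.exp_add, ← Real.exp_add]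
  congr 1
  rw [div_eq_mul_inv]
  linarith

theorem gig_characterization
    {Ω : Type*} [MeasureSpace Ω] [IsProbabilityMeasure (ℙ : Measure Ω)]
    (α β : ℝ) (hα : 0 ≤ α) (hβ : 0 ≤ β) (hαβ : α ≠ β)
    (X Y : Ω → ℝ) (hXm : Measurable X) (hYm : Measurable Y)
    (hXpos : ∀ ω, 0 < X ω) (hYpos : ∀ ω, 0 < Y ω)
    (hIndep : IndepFun X Y ℙ)
    (fX fY : ℝ → ℝ)
    (hfX : Measure.map X ℙ = volume.withDensity (fun x => ENNReal.ofReal (fX x)))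
    (hfY : Measure.map Y ℙ = volume.withDensity (fun x => ENNReal.ofReal (fY x)))
    (hfXpos : ∀ x ∈ Ioi (0 : ℝ), 0 < fX x)
    (hfYpos : ∀ x ∈ Ioi (0 : ℝ), 0 < fY x)
    (hfXdiff : ∀ x ∈ Ioi (0 : ℝ),
      DifferentiableAt ℝ fX x ∧ DifferentiableAt ℝ (deriv fX) x)
    (hfYdiff : ∀ x ∈ Ioi (0 : ℝ),
      DifferentiableAt ℝ fY x ∧ DifferentiableAt ℝ (deriv fY) x) :
    IndepFun (fun ω => (F1 α β (X ω, Y ω)).1) (fun ω => (F1 α β (X ω, Y ω)).2) ℙ ↔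
      ∃ (l c1 c2 : ℝ), 0 < c1 ∧ 0 < c2 ∧
        Measure.map X ℙ =
          volume.withDensity (fun x => ENNReal.ofReal (gigPdf l (c1 * α) c2 x)) ∧
        Measure.map Y ℙ =
          volume.withDensity (fun x => ENNReal.ofReal (gigPdf l (c2 * β) c1 x)) := by
  have hX0 : ∀ᵐ x ∂(Measure.map X ℙ), 0 < x := by
    rw [ae_map_iff hXm.aemeasurable measurableSet_Ioi]
    exact Filter.Eventually.of_forall hXpos
  have hY0 : ∀ᵐ x ∂(Measure.map Y ℙ), 0 < x := by
    rw [ae_map_iff hYm.aemeasurable measurableSet_Ioi]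
    exact Filter.Eventually.of_forall hYpos
  have : IsProbabilityMeasure (Measure.map X ℙ) := Measure.isProbabilityMeasure_map hXm.aemeasurable
  have : IsProbabilityMeasure (Measure.map Y ℙ) := Measure.isProbabilityMeasure_map hYm.aemeasurable
  have hXY := (indepFun_iff_map_prod_eq_prod_map_map hXm.aemeasurable hYm.aemeasurable).1 hIndep
  have hF := F1_meas α β
  have hU : Measurable (fun ω => (F1 α β (X ω, Y ω)).1) := by fun_prop
  have hV : Measurable (fun ω => (F1 α β (X ω, Y ω)).2) := by fun_prop
  have hmap : Measure.map (fun ω => ((F1 α β (X ω, Y ω)).1, (F1 α β (X ω, Y ω)).2)) ℙ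
      = Measure.map (F1 α β) ((Measure.map X ℙ).prod (Measure.map Y ℙ)) := by
    rw [← hXY, Measure.map_map hF (by fun_prop)]; rfl
  have hmem : ∀ᵐ p ∂((volume.restrict (Ioi (0:ℝ))).prod (volume.restrict (Ioi (0:ℝ)))),
      p ∈ Ioi (0:ℝ) ×ˢ Ioi (0:ℝ) := by
    rw [Measure.prod_restrict]
    exact ae_restrict_mem (measurableSet_Ioi.prod measurableSet_Ioi)
  constructor
  · intro hind
    have cX : ContinuousOn fX (Ioi 0) := fun x hx => (hfXdiff x hx).1.continuousAt.continuousWithinAt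
    have cY : ContinuousOn fY (Ioi 0) := fun x hx => (hfYdiff x hx).1.continuousAt.continuousWithinAt
    have rep : ∀ f : ℝ → ℝ, ContinuousOn f (Ioi 0) → ∃ g : ℝ → ENNReal, Measurable g ∧
        (∀ x, 0 < x → g x = ENNReal.ofReal (f x)) ∧ 
        (volume.restrict (Ioi (0:ℝ))).withDensity (fun x => ENNReal.ofReal (f x))
          = (volume.restrict (Ioi (0:ℝ))).withDensity g := by
      intro f hf
      classical
      have hm : Measurable (piecewise (Ioi 0) f (fun _ => 0)) :=
        hf.measurable_piecewise continuousOn_const measurableSet_Ioi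
      have he : ∀ x, 0 < x → ENNReal.ofReal (piecewise (Ioi 0) f (fun _ => 0) x) = ENNReal.ofReal (f x) := by
        intro x hx; rw [piecewise_eq_of_mem _ _ _ (mem_Ioi.2 hx)]
      refine ⟨fun x => ENNReal.ofReal (piecewise (Ioi 0) f (fun _ => 0) x), by fun_prop, he, ?_⟩
      apply withDensity_congr_ae
      filter_upwards [ae_restrict_mem measurableSet_Ioi] with x hx
      rw [he x hx]
    obtain ⟨gX, mX, eX, wX⟩ := rep fX cX
    obtain ⟨gY, mY, eY, wY⟩ := rep fY cY
    have lX := (law_restrict hfX hX0).trans wX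
    have lY := (law_restrict hfY hY0).trans wY
    have hlaw := hmap
    rw [lX, lY, law_UV α β hα hβ mX mY] at hlaw
    have hFc : ∀ p ∈ Ioi (0:ℝ) ×ˢ Ioi (0:ℝ), ContinuousAt (F1 α β) p := fun p hp => by
      obtain ⟨_, h, _⟩ := F1_deriv α β hα hβ p hp
      exact h.continuousAt
    have hhc : ∀ p ∈ Ioi (0:ℝ) ×ˢ Ioi (0:ℝ), 
        ContinuousAt (fun p => fX (F1 α β p).1 * fY (F1 α β p).2) p := fun p hp => by
      have hm := F1_mem α β hα hβ p hp
      have h1 := hFc p hp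
      have h2 : ContinuousAt (fun p => fX (F1 α β p).1) p := 
        ContinuousAt.comp (g := fX) (f := fun p => (F1 α β p).1) (hfXdiff _ hm.1).1.continuousAt h1.fst
      have h3 : ContinuousAt (fun p => fY (F1 α β p).2) p := 
        ContinuousAt.comp (g := fY) (f := fun p => (F1 α β p).2) (hfYdiff _ hm.2).1.continuousAt h1.snd
      exact h2.mul h3
    have hpos : ∀ u v, 0 < u → 0 < v → 0 < fX (F1 α β (u, v)).1 * fY (F1 α β (u, v)).2 := by
      intro u v hu hv
      have hm := F1_mem α β hα hβ (u, v) ⟨hu, hv⟩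
      exact mul_pos (hfXpos _ hm.1) (hfYpos _ hm.2)
    obtain ⟨u0, hu0, hfac⟩ := factor hU hV _ (by fun_prop) 
      (fun u v => fX (F1 α β (u, v)).1 * fY (F1 α β (u, v)).2) (by
        intro u v hu hv
        have hm := F1_mem α β hα hβ (u, v) ⟨hu, hv⟩
        rw [eX _ hm.1, eY _ hm.2, ← ENNReal.ofReal_mul (hfXpos _ hm.1).le]) hpos
      (fun u hu v hv => (ContinuousAt.comp (f := fun v => (u, v)) (hhc (u, v) ⟨hu, hv⟩) 
        (by fun_prop)).continuousWithinAt)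
      (fun v hv u hu => (ContinuousAt.comp (f := fun u => (u, v)) (hhc (u, v) ⟨hu, hv⟩) 
        (by fun_prop)).continuousWithinAt)
      hlaw hind
    obtain ⟨A, A1, hA, hA1⟩ := log_derivs hfXpos hfXdiff
    obtain ⟨B, B1, hB, hB1⟩ := log_derivs hfYpos hfYdiff
    set h : ℝ → ℝ → ℝ := fun u v => fX (F1 α β (u, v)).1 * fY (F1 α β (u, v)).2 with hh
    have hE := mixed α β hα hβ hαβ _ _ A B A1 B1 hA hB hA1 hB1 
      (fun r => Real.log (h (Real.exp r) 1)) 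
      (fun s => Real.log (h u0 (Real.exp s)) - Real.log (h u0 1)) (by
        intro r s
        have e := congrArg Real.log (hfac (Real.exp r) (Real.exp s) (Real.exp_pos r) (Real.exp_pos s))
        rw [Real.log_mul (hpos _ _ (Real.exp_pos r) (Real.exp_pos s)).ne' (hpos _ _ hu0 one_pos).ne',
          Real.log_mul (hpos _ _ (Real.exp_pos r) one_pos).ne' (hpos _ _ hu0 (Real.exp_pos s)).ne'] at e
        have e2 : Real.log (h (Real.exp r) (Real.exp s)) = 
            Real.log (fX (Real.exp (s + gS α β (r + s)))) + Real.log (fY (Real.exp (r - gS α β (r + s)))) := by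
          simp only [hh, F1_exp α β hα hβ]
          exact Real.log_mul (hfXpos _ (Real.exp_pos _)).ne' (hfYpos _ (Real.exp_pos _)).ne'
        linarith)
    obtain ⟨k, c1, c2, kA, kB⟩ := solve_all α β hα hβ hαβ A B A1 B1 hA1 hB1 hE
    obtain ⟨CX, hCX, fXe⟩ := integ_form hfXpos hA k (c1 * α) c2 kA
    obtain ⟨CY, hCY, fYe⟩ := integ_form hfYpos hB k (c2 * β) c1 kB
    obtain ⟨iX, gigX⟩ := law_gig hfX hX0 CX _ _ _ hCX fXe
    obtain ⟨iY, gigY⟩ := law_gig hfY hY0 CY _ _ _ hCY fYe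
    have hc2 : 0 < c2 := by
      rcases gw_zero _ _ _ iX with h | ⟨h, h'⟩
      · exact h
      · rcases gw_inf _ _ _ iY with h1 | ⟨_, h1⟩
        · simp [h] at h1
        · linarith
    have hc1 : 0 < c1 := by
      rcases gw_zero _ _ _ iY with h | ⟨h, h'⟩
      · exact h
      · rcases gw_inf _ _ _ iX with h1 | ⟨_, h1⟩
        · simp [h] at h1
        · linarith
    exact ⟨k + 1, c1, c2, hc1, hc2, gigX, gigY⟩
  · rintro ⟨l, c1, c2, hc1, hc2, gigX, gigY⟩
    have mw : ∀ l d1 d2, Measurable (gw l d1 d2) := by intro l d1 d2; unfold gw; fun_prop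
    rw [gig_law] at gigX gigY
    generalize hZ1 : (∫ t in Set.Ioi (0 : ℝ), gw l (c1 * α) c2 t) = Z1 at gigX
    generalize hZ2 : (∫ t in Set.Ioi (0 : ℝ), gw l (c2 * β) c1 t) = Z2 at gigY
    have hZ1' : 0 ≤ Z1 := by
      rw [← hZ1]; exact setIntegral_nonneg measurableSet_Ioi (fun x hx => (gw_pos _ _ _ x hx).le)
    have hZ2' : 0 ≤ Z2 := by
      rw [← hZ2]; exact setIntegral_nonneg measurableSet_Ioi (fun x hx => (gw_pos _ _ _ x hx).le)
    have m1 := mw l (c1 * α) c2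
    have m2 := mw l (c2 * β) c1
    have m3 := mw l (c2 * α) c1
    have m4 := mw l (c1 * β) c2
    refine indep_of_prod hU hV 
      ((volume.restrict (Ioi (0:ℝ))).withDensity (fun u => ENNReal.ofReal (gw l (c2 * α) c1 u / Z1)))
      ((volume.restrict (Ioi (0:ℝ))).withDensity (fun u => ENNReal.ofReal (gw l (c1 * β) c2 u / Z2))) ?_
    rw [hmap, gigX, gigY, law_UV α β hα hβ (by fun_prop) (by fun_prop), 
      prod_withDensity (by fun_prop) (by fun_prop)]
    apply withDensity_congr_ae
    filter_upwards [hmem] with p hp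
    have hm := F1_mem α β hα hβ p hp
    have g1 := gw_pos l (c1 * α) c2 _ hm.1
    have g3 := gw_pos l (c2 * α) c1 _ hp.1
    rw [← ENNReal.ofReal_mul (by positivity), ← ENNReal.ofReal_mul (by positivity), div_mul_div_comm,
      div_mul_div_comm, gw_F1 α β l c1 c2 p.1 p.2 hα hβ hp.1 hp.2]
end

section
/- Let F₂(x,y) = (min{x,0} − y, min{x,y,0} − x − y). If X and Y are independent ℝ-valued random variables with X ~ AL(p,q) and Y ~ AL(p+q, r) for some p, q, r > 0, then (U,V) := F₂(X,Y) are independent, with U ~ AL(r,q) and V ~ AL(q+r, p). -/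
open MeasureTheory ProbabilityTheory Set

/-- Density of the asymmetric Laplace distribution AL(l1, l2):
`(1/Z)(e^{-l1 x} 1_{[0,∞)}(x) + e^{l2 x} 1_{(-∞,0)}(x))` with `Z = 1/l1 + 1/l2`. -/
noncomputable def alPdf (l1 l2 : ℝ) : ℝ → ℝ := fun x =>
  (l1 * l2 / (l1 + l2)) *
    (if 0 ≤ x then Real.exp (-(l1 * x)) else Real.exp (l2 * x))

/-- The transformation F₂. -/
noncomputable def F2 : ℝ × ℝ → ℝ × ℝ := fun p =>
  (min p.1 0 - p.2, min (min p.1 p.2) 0 - p.1 - p.2)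

theorem alPdf_nonneg_arg (a b x : ℝ) (hx : 0 ≤ x) :
    alPdf a b x = a * b / (a + b) * Real.exp (-(a * x)) := by
  simp [alPdf, hx]

theorem alPdf_nonpos_arg (a b x : ℝ) (hx : x ≤ 0) :
    alPdf a b x = a * b / (a + b) * Real.exp (b * x) := by
  rcases hx.lt_or_eq with h | h
  · simp [alPdf, not_le.2 h]
  · simp [alPdf, h]

theorem alPdf_nn (a b : ℝ) (ha : 0 < a) (hb : 0 < b) (x : ℝ) : 0 ≤ alPdf a b x := by
  unfold alPdf
  split_ifs <;> positivity

theorem alPdf_meas (a b : ℝ) : Measurable (alPdf a b) := by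
  unfold alPdf
  refine Measurable.const_mul ?_ _
  exact Measurable.ite measurableSet_Ici (by fun_prop) (by fun_prop)

theorem alPdf_dens_meas (a b : ℝ) : Measurable (fun x => ENNReal.ofReal (alPdf a b x)) :=
  (alPdf_meas a b).ennreal_ofReal

theorem alPdf_prob (a b : ℝ) (ha : 0 < a) (hb : 0 < b) :
    IsProbabilityMeasure (volume.withDensity (fun x => ENNReal.ofReal (alPdf a b x))) := by
  constructor
  rw [withDensity_apply _ MeasurableSet.univ, Measure.restrict_univ]
  rw [← lintegral_add_compl _ (measurableSet_Iic (a := (0:ℝ))), compl_Iic]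
  have h1 : ∫⁻ x in Iic (0:ℝ), ENNReal.ofReal (alPdf a b x)
      = ENNReal.ofReal (a * b / (a + b) * (1 / b)) := by
    rw [setLIntegral_congr_fun (g := fun x => ENNReal.ofReal (a * b / (a + b) * Real.exp (b * x)))
      measurableSet_Iic (fun x hx => by simp only [alPdf_nonpos_arg a b x hx])]
    rw [← ofReal_integral_eq_lintegral_ofReal ((integrableOn_exp_mul_Iic hb 0).const_mul _)
      (Filter.Eventually.of_forall fun x => by simp only [Pi.zero_apply]; positivity)]
    rw [integral_const_mul, integral_exp_mul_Iic hb]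
    simp
  have h2 : ∫⁻ x in Ioi (0:ℝ), ENNReal.ofReal (alPdf a b x)
      = ENNReal.ofReal (a * b / (a + b) * (1 / a)) := by
    rw [setLIntegral_congr_fun (g := fun x => ENNReal.ofReal (a * b / (a + b) * Real.exp (-a * x)))
      measurableSet_Ioi (fun x hx => by
        simp only [alPdf_nonneg_arg a b x (le_of_lt hx), neg_mul])]
    rw [← ofReal_integral_eq_lintegral_ofReal
      ((integrableOn_exp_mul_Ioi (neg_lt_zero.2 ha) 0).const_mul _)
      (Filter.Eventually.of_forall fun x => by simp only [Pi.zero_apply]; positivity)]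
    rw [integral_const_mul, integral_exp_mul_Ioi (neg_lt_zero.2 ha)]
    simp
  rw [h1, h2, ← ENNReal.ofReal_add (by positivity) (by positivity), ← ENNReal.ofReal_one]
  congr 1
  field_simp

theorem al_shear : MeasurePreserving (fun z : ℝ × ℝ => (z.1, min z.1 0 - z.2))
    (volume.prod volume) (volume.prod volume) := by
  refine MeasurePreserving.skew_product (f := fun x : ℝ => x) (g := fun x y : ℝ => min x 0 - y)
    (MeasurePreserving.id _) ?_ ?_
  · unfold Function.uncurry
    fun_prop
  · exact Filter.Eventually.of_forall fun x => (Measure.measurePreserving_sub_left volume (min x 0)).map_eq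

theorem F2_mp : MeasurePreserving F2 ((volume : Measure ℝ).prod (volume : Measure ℝ))
    (volume.prod volume) := by
  have h := al_shear.comp (Measure.measurePreserving_swap.comp al_shear)
  convert h using 1
  funext ⟨x, y⟩
  simp only [F2, Function.comp, Prod.swap, Prod.mk.injEq, true_and]
  rcases le_total x y with h1 | h1 <;> rcases le_total x 0 with h2 | h2 <;>
    rcases le_total y 0 with h3 | h3 <;> grind

theorem al_density (p q r : ℝ) (hp : 0 < p) (hq : 0 < q) (hr : 0 < r) (x y : ℝ) :
    alPdf p q x * alPdf (p + q) r y =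
      alPdf r q (min x 0 - y) * alPdf (q + r) p (min (min x y) 0 - x - y) := by
  have key : ∀ s t u v : ℝ, s + t = u + v →
      p * q / (p + q) * Real.exp s * ((p + q) * r / (p + q + r) * Real.exp t) =
      r * q / (r + q) * Real.exp u * ((q + r) * p / (q + r + p) * Real.exp v) := by
    intro s t u v h
    have e : Real.exp s * Real.exp t = Real.exp u * Real.exp v := by
      rw [← Real.exp_add, ← Real.exp_add, h]
    have c : p * q / (p + q) * ((p + q) * r / (p + q + r)) =
        r * q / (r + q) * ((q + r) * p / (q + r + p)) := by
      field_simp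
      ring
    calc _ = p * q / (p + q) * ((p + q) * r / (p + q + r)) * (Real.exp s * Real.exp t) := by ring
      _ = _ := by rw [c, e]; ring
  rcases le_total 0 x with hx | hx
  · rw [min_eq_right hx, alPdf_nonneg_arg p q x hx]
    rcases le_total 0 y with hy | hy
    · rw [min_eq_right (le_min hx hy), alPdf_nonneg_arg _ _ y hy, alPdf_nonpos_arg r q _ (by linarith),
        alPdf_nonpos_arg _ p _ (by linarith)]
      apply key; ring
    · rw [min_eq_right (hy.trans hx), min_eq_left hy, alPdf_nonpos_arg _ _ y hy,
        alPdf_nonneg_arg r q _ (by linarith), alPdf_nonpos_arg _ p _ (by linarith)]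
      apply key; ring
  · rw [min_eq_left hx, min_eq_left ((min_le_left x y).trans hx), alPdf_nonpos_arg p q x hx]
    rcases le_total x y with hxy | hxy
    · rw [min_eq_left hxy, alPdf_nonpos_arg r q _ (by linarith)]
      rcases le_total 0 y with hy | hy
      · rw [alPdf_nonneg_arg _ _ y hy, alPdf_nonpos_arg _ p _ (by linarith)]
        apply key; ring
      · rw [alPdf_nonpos_arg _ _ y hy, alPdf_nonneg_arg _ p _ (by linarith)]
        apply key; ring
    · rw [min_eq_right hxy, alPdf_nonneg_arg r q _ (by linarith),
        alPdf_nonpos_arg _ _ y (by linarith), alPdf_nonneg_arg _ p _ (by linarith)]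
      apply key; ring

theorem al_if_part
    {Ω : Type*} [MeasureSpace Ω] [IsProbabilityMeasure (ℙ : Measure Ω)]
    (X Y : Ω → ℝ) (hXm : Measurable X) (hYm : Measurable Y)
    (hIndep : IndepFun X Y ℙ)
    (p q r : ℝ) (hp : 0 < p) (hq : 0 < q) (hr : 0 < r)
    (hX : Measure.map X ℙ = volume.withDensity (fun x => ENNReal.ofReal (alPdf p q x)))
    (hY : Measure.map Y ℙ =
      volume.withDensity (fun x => ENNReal.ofReal (alPdf (p + q) r x))) :
    IndepFun (fun ω => (F2 (X ω, Y ω)).1) (fun ω => (F2 (X ω, Y ω)).2) ℙ ∧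
      Measure.map (fun ω => (F2 (X ω, Y ω)).1) ℙ =
        volume.withDensity (fun x => ENNReal.ofReal (alPdf r q x)) ∧
      Measure.map (fun ω => (F2 (X ω, Y ω)).2) ℙ =
        volume.withDensity (fun x => ENNReal.ofReal (alPdf (q + r) p x)) := by
  have hF : Measurable F2 := F2_mp.measurable
  have hXY : Measurable (fun ω => (X ω, Y ω)) := hXm.prodMk hYm
  have hU : Measurable (fun ω => (F2 (X ω, Y ω)).1) := (hF.comp hXY).fst
  have hV : Measurable (fun ω => (F2 (X ω, Y ω)).2) := (hF.comp hXY).snd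
  have hqr : 0 < q + r := by linarith
  have := alPdf_prob r q hr hq
  have := alPdf_prob (q + r) p hqr hp
  have hjoint : Measure.map (fun ω => F2 (X ω, Y ω)) ℙ =
      (volume.withDensity (fun x => ENNReal.ofReal (alPdf r q x))).prod
        (volume.withDensity (fun x => ENNReal.ofReal (alPdf (q + r) p x))) := by
    have h0 := (indepFun_iff_map_prod_eq_prod_map_map hXm.aemeasurable hYm.aemeasurable).1 hIndep
    rw [hX, hY, prod_withDensity (alPdf_dens_meas _ _) (alPdf_dens_meas _ _)] at h0
    have h1 : Measure.map (fun ω => F2 (X ω, Y ω)) ℙ =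
        Measure.map F2 (Measure.map (fun ω => (X ω, Y ω)) ℙ) :=
      (Measure.map_map hF hXY).symm
    rw [h1, h0, prod_withDensity (alPdf_dens_meas _ _) (alPdf_dens_meas _ _)]
    ext s hs
    rw [Measure.map_apply hF hs, withDensity_apply _ (hF hs), withDensity_apply _ hs,
      ← F2_mp.setLIntegral_comp_preimage hs
        (f := fun a => ENNReal.ofReal (alPdf r q a.1) * ENNReal.ofReal (alPdf (q + r) p a.2))
        (((alPdf_dens_meas _ _).comp measurable_fst).mul
          ((alPdf_dens_meas _ _).comp measurable_snd))]
    refine lintegral_congr fun z => ?_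
    rw [← ENNReal.ofReal_mul (alPdf_nn _ _ hp hq _), al_density p q r hp hq hr,
      ENNReal.ofReal_mul (alPdf_nn _ _ hr hq _)]
    rfl
  have hmU : Measure.map (fun ω => (F2 (X ω, Y ω)).1) ℙ =
      volume.withDensity (fun x => ENNReal.ofReal (alPdf r q x)) := by
    have h1 := Measure.map_map (μ := (ℙ : Measure Ω)) measurable_fst (hF.comp hXY)
    have h2 : Measure.map (F2 ∘ fun ω => (X ω, Y ω)) ℙ = _ := hjoint
    rw [h2, Measure.map_fst_prod, measure_univ, one_smul] at h1
    exact h1.symm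
  have hmV : Measure.map (fun ω => (F2 (X ω, Y ω)).2) ℙ =
      volume.withDensity (fun x => ENNReal.ofReal (alPdf (q + r) p x)) := by
    have h1 := Measure.map_map (μ := (ℙ : Measure Ω)) measurable_snd (hF.comp hXY)
    have h2 : Measure.map (F2 ∘ fun ω => (X ω, Y ω)) ℙ = _ := hjoint
    rw [h2, Measure.map_snd_prod, measure_univ, one_smul] at h1
    exact h1.symm
  refine ⟨?_, hmU, hmV⟩
  rw [indepFun_iff_map_prod_eq_prod_map_map hU.aemeasurable hV.aemeasurable, hmU, hmV]
  exact hjoint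
end

section
/- Let c₁, c₂ > 0 and let F₃(x,y) = (min{−x,y}, y + x − min{−x,y}). Let X and Y be ℝ-valued independent random variables with densities f_X and f_Y satisfying: f_X(x) > 0 for x ∈ [−c₁, c₂] and f_X(x) = 0 otherwise; f_Y(y) > 0 for y ∈ [−c₂, ∞) and f_Y(y) = 0 otherwise; and both densities are twice-differentiable in the interior of their supports. Set (U,V) := F₃(X,Y). Then U and V are independent if and only if there exists λ > 0 such that X ~ stExp(λ, −c₁, c₂) and Y ~ sExp(λ, −c₂). -/
open MeasureTheory ProbabilityTheory Set

/-- Density of the shifted exponential distribution sExp(l, c):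
`(1/Z) e^{-l x} 1_{[c,∞)}(x)` with `Z = (1/l) e^{-l c}`. -/
noncomputable def sExpPdf (l c : ℝ) : ℝ → ℝ := fun x =>
  if c ≤ x then Real.exp (-(l * x)) / ((1 / l) * Real.exp (-(l * c))) else 0

/-- Density of the shifted truncated exponential distribution stExp(l, c1, c2):
`(1/Z) e^{-l x} 1_{[c1,c2]}(x)` with `Z = (1/l)(e^{-l c1} - e^{-l c2})`. -/
noncomputable def stExpPdf (l c1 c2 : ℝ) : ℝ → ℝ := fun x =>
  if c1 ≤ x ∧ x ≤ c2 then
    Real.exp (-(l * x)) / ((1 / l) * (Real.exp (-(l * c1)) - Real.exp (-(l * c2))))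
  else 0

/-- The transformation F₃. -/
noncomputable def F3 : ℝ × ℝ → ℝ × ℝ := fun p =>
  (min (-p.1) p.2, p.2 + p.1 - min (-p.1) p.2)

noncomputable def G3 : ℝ × ℝ → ℝ × ℝ := fun q =>
  if 0 ≤ q.1 + q.2 then (-q.1, q.2 + 2 * q.1) else (q.2, q.1)

lemma F3_of_nonneg (p : ℝ × ℝ) (h : 0 ≤ p.1 + p.2) : F3 p = (-p.1, p.2 + 2 * p.1) := by
  unfold F3
  rw [min_eq_left (by linarith)]
  ext <;> simp; ring

lemma F3_of_neg (p : ℝ × ℝ) (h : ¬ 0 ≤ p.1 + p.2) : F3 p = (p.2, p.1) := by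
  unfold F3
  rw [min_eq_right (by linarith)]
  ext <;> simp

lemma G3_F3 (p : ℝ × ℝ) : G3 (F3 p) = p := by
  by_cases h : 0 ≤ p.1 + p.2
  · rw [F3_of_nonneg p h, G3, if_pos (by simp only; linarith)]
    ext <;> simp
  · rw [F3_of_neg p h, G3, if_neg (by simp only; linarith)]

lemma measurable_F3 : Measurable F3 := by
  unfold F3
  fun_prop

lemma measurable_G3 : Measurable G3 := by
  unfold G3
  refine Measurable.ite (measurableSet_le (by fun_prop) (by fun_prop)) (by fun_prop) (by fun_prop)

lemma mp_L1 : MeasurePreserving (fun p : ℝ × ℝ => (-p.1, p.2 + 2 * p.1)) volume volume := by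
  refine MeasurePreserving.skew_product (f := fun x : ℝ => -x) (g := fun x y : ℝ => y + 2 * x)
    (Measure.measurePreserving_neg _) (by unfold Function.uncurry; fun_prop) ?_
  filter_upwards with x
  exact (measurePreserving_add_right volume (2 * x)).map_eq

lemma mp_L2 : MeasurePreserving (fun p : ℝ × ℝ => (p.2, p.1)) volume volume :=
  Measure.measurePreserving_swap

lemma mp_F3 : MeasurePreserving F3 volume volume := by
  refine ⟨measurable_F3, ?_⟩
  have hA : MeasurableSet {p : ℝ × ℝ | 0 ≤ p.1 + p.2} :=
    measurableSet_le (by fun_prop) (by fun_prop)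
  ext S hS
  rw [Measure.map_apply measurable_F3 hS, ← measure_inter_add_sdiff _ hA,
    ← measure_inter_add_sdiff S hA]
  congr 1
  · rw [← mp_L1.measure_preimage (hS.inter hA).nullMeasurableSet]
    congr 1
    ext p
    simp only [mem_inter_iff, mem_preimage, mem_ofPred_eq]
    constructor
    · rintro ⟨h1, h2⟩
      rw [F3_of_nonneg p h2] at h1
      exact ⟨h1, by linarith⟩
    · rintro ⟨h1, h2⟩
      have h2 : 0 ≤ p.1 + p.2 := by linarith
      rw [F3_of_nonneg p h2]
      exact ⟨h1, h2⟩
  · rw [← mp_L2.measure_preimage (hS.diff hA).nullMeasurableSet]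
    congr 1
    ext p
    simp only [mem_sdiff, mem_preimage, mem_ofPred_eq]
    constructor
    · rintro ⟨h1, h2⟩
      rw [F3_of_neg p h2] at h1
      exact ⟨h1, by linarith⟩
    · rintro ⟨h1, h2⟩
      have h2 : ¬ 0 ≤ p.1 + p.2 := by linarith
      rw [F3_of_neg p h2]
      exact ⟨h1, h2⟩

lemma map_F3_withDensity (f : ℝ × ℝ → ENNReal) (hf : Measurable f) :
    Measure.map F3 (volume.withDensity f) = volume.withDensity (fun q => f (G3 q)) := by
  ext S hS
  rw [Measure.map_apply measurable_F3 hS, withDensity_apply _ (measurable_F3 hS),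
    withDensity_apply _ hS]
  have := mp_F3.setLIntegral_comp_preimage hS (hf.comp measurable_G3)
  simpa [G3_F3] using this

lemma joint_law {Ω : Type*} [MeasureSpace Ω] [IsProbabilityMeasure (ℙ : Measure Ω)]
    (X Y : Ω → ℝ) (hXm : Measurable X) (hYm : Measurable Y)
    (hIndep : IndepFun X Y ℙ) (a b : ℝ → ENNReal) (ha : Measurable a) (hb : Measurable b)
    (hX : Measure.map X ℙ = volume.withDensity a)
    (hY : Measure.map Y ℙ = volume.withDensity b) :
    Measure.map (fun ω => ((F3 (X ω, Y ω)).1, (F3 (X ω, Y ω)).2)) ℙ =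
      volume.withDensity (fun q => a (G3 q).1 * b (G3 q).2) := by
  have h := (indepFun_iff_map_prod_eq_prod_map_map hXm.aemeasurable hYm.aemeasurable).1 hIndep
  rw [hX, hY, prod_withDensity ha hb] at h
  have h2 := map_F3_withDensity (fun z => a z.1 * b z.2) (by fun_prop)
  rw [Measure.volume_eq_prod] at h2 ⊢
  rw [← h2, ← h, Measure.map_map measurable_F3 (by fun_prop)]
  rfl

lemma indep_of_map_eq_prod {Ω : Type*} [MeasureSpace Ω] [IsProbabilityMeasure (ℙ : Measure Ω)]
    (U V : Ω → ℝ) (hU : Measurable U) (hV : Measurable V) (μ ν : Measure ℝ) [SFinite μ] [SFinite ν]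
    (h : Measure.map (fun ω => (U ω, V ω)) ℙ = μ.prod ν) : IndepFun U V ℙ := by
  have h1 : Measure.map U ℙ = ν univ • μ := by
    rw [← Measure.map_fst_prod, ← h, Measure.map_map measurable_fst (by fun_prop)]; rfl
  have h2 : Measure.map V ℙ = μ univ • ν := by
    rw [← Measure.map_snd_prod, ← h, Measure.map_map measurable_snd (by fun_prop)]; rfl
  have h3 : ν univ * μ univ = 1 := by
    have := congrArg (fun m => m univ) h1
    simp only [Measure.smul_apply, smul_eq_mul] at this
    rw [← this, Measure.map_apply hU .univ]
    simp
  rw [indepFun_iff_map_prod_eq_prod_map_map hU.aemeasurable hV.aemeasurable, h, h1, h2,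
    Measure.prod_smul_left, Measure.prod_smul_right, smul_smul, h3, one_smul]

/-- backward direction -/
lemma backward {Ω : Type*} [MeasureSpace Ω] [IsProbabilityMeasure (ℙ : Measure Ω)]
    (c₁ c₂ : ℝ)
    (X Y : Ω → ℝ) (hXm : Measurable X) (hYm : Measurable Y)
    (hIndep : IndepFun X Y ℙ) (l : ℝ)
    (hX : Measure.map X ℙ =
          volume.withDensity (fun x => ENNReal.ofReal (stExpPdf l (-c₁) c₂ x)))
    (hY : Measure.map Y ℙ =
          volume.withDensity (fun y => ENNReal.ofReal (sExpPdf l (-c₂) y))) (hl : 0 < l) 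
    (hc : -c₁ ≤ c₂) :
    IndepFun (fun ω => (F3 (X ω, Y ω)).1) (fun ω => (F3 (X ω, Y ω)).2) ℙ := by
  have m1 : Measurable (fun x => ENNReal.ofReal (stExpPdf l (-c₁) c₂ x)) := by
    unfold stExpPdf
    exact (Measurable.ite measurableSet_Icc (by fun_prop) (by fun_prop)).ennreal_ofReal
  have m2 : Measurable (fun y => ENNReal.ofReal (sExpPdf l (-c₂) y)) := by
    unfold sExpPdf
    exact (Measurable.ite measurableSet_Ici (by fun_prop) (by fun_prop)).ennreal_ofReal
  have h := joint_law X Y hXm hYm hIndep _ _ m1 m2 hX hY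
  set Z1 := ((1 / l) * (Real.exp (-(l * -c₁)) - Real.exp (-(l * c₂)))) with hZ1
  set Z2 := ((1 / l) * Real.exp (-(l * -c₂))) with hZ2
  have hZ1' : 0 ≤ Z1 := by
    have : Real.exp (-(l * c₂)) ≤ Real.exp (-(l * -c₁)) := Real.exp_le_exp.2 (by nlinarith)
    have h2 : 0 ≤ Real.exp (-(l * -c₁)) - Real.exp (-(l * c₂)) := by linarith
    positivity
  have hZ2' : 0 ≤ Z2 := by positivity
  let a : ℝ → ENNReal := fun u => ENNReal.ofReal
    (if -c₂ ≤ u ∧ u ≤ c₁ then Real.exp (-(l * u)) / Z1 else 0)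
  let b : ℝ → ENNReal := fun v => ENNReal.ofReal
    (if -c₁ ≤ v then Real.exp (-(l * v)) / Z2 else 0)
  have ma : Measurable a :=
    (Measurable.ite measurableSet_Icc (by fun_prop) (by fun_prop)).ennreal_ofReal
  have mb : Measurable b :=
    (Measurable.ite measurableSet_Ici (by fun_prop) (by fun_prop)).ennreal_ofReal
  have key : (fun q : ℝ × ℝ => ENNReal.ofReal (stExpPdf l (-c₁) c₂ (G3 q).1) *
      ENNReal.ofReal (sExpPdf l (-c₂) (G3 q).2)) = fun q => a q.1 * b q.2 := by
    funext ⟨u, v⟩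
    have e1 : ∀ x, 0 ≤ stExpPdf l (-c₁) c₂ x := by
      intro x; unfold stExpPdf; rw [← hZ1]; split_ifs <;> positivity
    have e3 : 0 ≤ (if -c₂ ≤ u ∧ u ≤ c₁ then Real.exp (-(l * u)) / Z1 else 0) := by
      split_ifs <;> positivity
    simp only [a, b]
    rw [← ENNReal.ofReal_mul (e1 _), ← ENNReal.ofReal_mul e3]
    congr 1
    unfold stExpPdf sExpPdf
    rw [← hZ1, ← hZ2]
    unfold G3
    by_cases hs : 0 ≤ u + v
    · simp only [hs, if_true]
      by_cases h1 : -c₂ ≤ u ∧ u ≤ c₁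
      · rw [if_pos (by constructor <;> linarith [h1.1, h1.2]), if_pos (by linarith [h1.1, h1.2]),
          if_pos h1, if_pos (by linarith [h1.1, h1.2]), div_mul_div_comm, div_mul_div_comm,
          ← Real.exp_add, ← Real.exp_add]
        ring_nf
      · rw [if_neg (fun h => h1 (by constructor <;> linarith [h.1, h.2])), if_neg h1]
        simp
    · simp only [hs, if_false]
      by_cases h1 : (-c₂ ≤ u ∧ u ≤ c₁) ∧ -c₁ ≤ v
      · rw [if_pos (by constructor <;> linarith [h1.1.1, h1.1.2, h1.2]),
          if_pos (by linarith [h1.1.1]),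
          if_pos h1.1, if_pos h1.2, div_mul_div_comm, div_mul_div_comm,
          ← Real.exp_add, ← Real.exp_add]
        ring_nf
      · have : ¬ ((-c₁ ≤ v ∧ v ≤ c₂) ∧ -c₂ ≤ u) := by
          rintro ⟨⟨h2, h3⟩, h4⟩
          exact h1 ⟨⟨h4, by linarith⟩, h2⟩
        rw [ite_zero_mul_ite_zero, ite_zero_mul_ite_zero, if_neg this, if_neg h1]
  rw [key] at h
  refine indep_of_map_eq_prod _ _ (measurable_fst.comp (measurable_F3.comp (hXm.prodMk hYm)))
    (measurable_snd.comp (measurable_F3.comp (hXm.prodMk hYm)))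
    (volume.withDensity a) (volume.withDensity b) ?_
  rw [prod_withDensity ma mb, ← Measure.volume_eq_prod]
  exact h

lemma cross_ae {Ω : Type*} [MeasureSpace Ω] [IsProbabilityMeasure (ℙ : Measure Ω)]
    (U V : Ω → ℝ) (hU : Measurable U) (hV : Measurable V) (hind : IndepFun U V ℙ)
    (G : ℝ × ℝ → ENNReal) (hG : Measurable G)
    (h : Measure.map (fun ω => (U ω, V ω)) ℙ = volume.withDensity G) :
    ∀ᵐ z : (ℝ × ℝ) × (ℝ × ℝ), G z.1 * G z.2 = G (z.1.1, z.2.2) * G (z.2.1, z.1.2) := by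
  have hac : Measure.map (fun ω => (U ω, V ω)) ℙ ≪ volume := by
    rw [h]; exact withDensity_absolutelyContinuous _ _
  have hUac : Measure.map U ℙ ≪ volume := by
    have : Measure.map U ℙ = Measure.map Prod.fst (Measure.map (fun ω => (U ω, V ω)) ℙ) := by
      rw [Measure.map_map measurable_fst (by fun_prop)]; rfl
    rw [this]
    exact (hac.map measurable_fst).trans Measure.quasiMeasurePreserving_fst.absolutelyContinuous
  have hVac : Measure.map V ℙ ≪ volume := by
    have : Measure.map V ℙ = Measure.map Prod.snd (Measure.map (fun ω => (U ω, V ω)) ℙ) := by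
      rw [Measure.map_map measurable_snd (by fun_prop)]; rfl
    rw [this]
    exact (hac.map measurable_snd).trans Measure.quasiMeasurePreserving_snd.absolutelyContinuous
  have hprod := (indepFun_iff_map_prod_eq_prod_map_map hU.aemeasurable hV.aemeasurable).1 hind
  set a := (Measure.map U ℙ).rnDeriv volume
  set b := (Measure.map V ℙ).rnDeriv volume
  have ma : Measurable a := Measure.measurable_rnDeriv _ _
  have mb : Measurable b := Measure.measurable_rnDeriv _ _
  rw [← Measure.withDensity_rnDeriv_eq _ _ hUac, ← Measure.withDensity_rnDeriv_eq _ _ hVac,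
    prod_withDensity ma mb, ← Measure.volume_eq_prod, h] at hprod
  have hfin : ∫⁻ q, G q ≠ ⊤ := by
    have := congrArg (fun m => m univ) h
    simp only [withDensity_apply _ MeasurableSet.univ, Measure.restrict_univ] at this
    rw [← this]
    have : IsProbabilityMeasure (Measure.map (fun ω => (U ω, V ω)) ℙ) :=
      Measure.isProbabilityMeasure_map (by fun_prop)
    exact measure_ne_top _ _
  have hae := (withDensity_eq_iff hG.aemeasurable (by fun_prop) hfin).1 hprod
  have q1 : Measure.QuasiMeasurePreserving (fun z : (ℝ × ℝ) × (ℝ × ℝ) => z.1) volume volume :=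
    Measure.quasiMeasurePreserving_fst
  have q2 : Measure.QuasiMeasurePreserving (fun z : (ℝ × ℝ) × (ℝ × ℝ) => z.2) volume volume :=
    Measure.quasiMeasurePreserving_snd
  have q3 : Measure.QuasiMeasurePreserving
      (fun z : (ℝ × ℝ) × (ℝ × ℝ) => (z.1.1, z.2.2)) volume volume :=
    MeasureTheory.QuasiMeasurePreserving.prodMap
      (Measure.quasiMeasurePreserving_fst (μ := (volume : Measure ℝ)) (ν := (volume : Measure ℝ)))
      (Measure.quasiMeasurePreserving_snd (μ := (volume : Measure ℝ)) (ν := (volume : Measure ℝ)))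
  have q4 : Measure.QuasiMeasurePreserving
      (fun z : (ℝ × ℝ) × (ℝ × ℝ) => (z.2.1, z.1.2)) volume volume :=
    mp_L2.quasiMeasurePreserving.comp (MeasureTheory.QuasiMeasurePreserving.prodMap
      (Measure.quasiMeasurePreserving_snd (μ := (volume : Measure ℝ)) (ν := (volume : Measure ℝ)))
      (Measure.quasiMeasurePreserving_fst (μ := (volume : Measure ℝ)) (ν := (volume : Measure ℝ))))
  filter_upwards [q1.ae hae, q2.ae hae, q3.ae hae, q4.ae hae] with z h1 h2 h3 h4
  rw [h1, h2, h3, h4]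
  ring

/-- the joint density -/
noncomputable def rr (pX pY : ℝ → ℝ) : ℝ × ℝ → ℝ := fun q => pX (G3 q).1 * pY (G3 q).2

lemma rr_cont (c₁ c₂ : ℝ) (pX pY : ℝ → ℝ)
    (hX : ∀ x ∈ Ioo (-c₁) c₂, ContinuousAt pX x)
    (hY : ∀ y ∈ Ioi (-c₂), ContinuousAt pY y)
    (q : ℝ × ℝ) (h1 : q.1 ∈ Ioo (-c₂) c₁) (h2 : -c₁ < q.2) (h3 : q.1 + q.2 ≠ 0) :
    ContinuousAt (rr pX pY) q := by
  obtain ⟨h1, h1'⟩ := h1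
  have hc : ContinuousAt (fun q : ℝ × ℝ => q.1 + q.2) q := by fun_prop
  rcases lt_or_gt_of_ne h3 with h | h
  · have hE : rr pX pY =ᶠ[nhds q] fun q => pX q.2 * pY q.1 := by
      filter_upwards [hc.eventually_lt_const h] with p hp
      unfold rr G3
      rw [if_neg (not_le.2 hp)]
    refine ContinuousAt.congr ?_ hE.symm
    exact (ContinuousAt.comp (f := Prod.snd) (hX _ ⟨h2, by linarith⟩) (by fun_prop)).mul
      (ContinuousAt.comp (f := Prod.fst) (hY _ h1) (by fun_prop))
  · have hE : rr pX pY =ᶠ[nhds q] fun q => pX (-q.1) * pY (q.2 + 2 * q.1) := by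
      filter_upwards [hc.eventually_const_lt h] with p hp
      unfold rr G3
      rw [if_pos hp.le]
    refine ContinuousAt.congr ?_ hE.symm
    exact (ContinuousAt.comp (f := fun q : ℝ × ℝ => -q.1) (hX _ ⟨by linarith, by linarith⟩)
        (by fun_prop)).mul
      (ContinuousAt.comp (f := fun q : ℝ × ℝ => q.2 + 2 * q.1) (hY _ (by
        simp only [mem_Ioi]; linarith)) (by fun_prop))

lemma cross {Ω : Type*} [MeasureSpace Ω] [IsProbabilityMeasure (ℙ : Measure Ω)]
    (c₁ c₂ : ℝ)
    (X Y : Ω → ℝ) (hXm : Measurable X) (hYm : Measurable Y)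
    (hIndep : IndepFun X Y ℙ) (pX pY : ℝ → ℝ) (mX : Measurable pX) (mY : Measurable pY)
    (nX : ∀ x, 0 ≤ pX x) (nY : ∀ x, 0 ≤ pY x)
    (hX : Measure.map X ℙ = volume.withDensity (fun x => ENNReal.ofReal (pX x)))
    (hY : Measure.map Y ℙ = volume.withDensity (fun y => ENNReal.ofReal (pY y)))
    (hXc : ∀ x ∈ Ioo (-c₁) c₂, ContinuousAt pX x)
    (hYc : ∀ y ∈ Ioi (-c₂), ContinuousAt pY y)
    (hind : IndepFun (fun ω => (F3 (X ω, Y ω)).1) (fun ω => (F3 (X ω, Y ω)).2) ℙ)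
    (u v u' v' : ℝ) (hu : u ∈ Ioo (-c₂) c₁) (hu' : u' ∈ Ioo (-c₂) c₁)
    (hv : -c₁ < v) (hv' : -c₁ < v') (h1 : u + v ≠ 0) (h2 : u' + v' ≠ 0) (h3 : u + v' ≠ 0)
    (h4 : u' + v ≠ 0) :
    rr pX pY (u, v) * rr pX pY (u', v') = rr pX pY (u, v') * rr pX pY (u', v) := by
  have h := joint_law X Y hXm hYm hIndep _ _ mX.ennreal_ofReal mY.ennreal_ofReal hX hY
  have hr0 : ∀ q, 0 ≤ rr pX pY q := fun q => mul_nonneg (nX _) (nY _)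
  have hmr : Measurable (rr pX pY) :=
    (mX.comp (measurable_fst.comp measurable_G3)).mul (mY.comp (measurable_snd.comp measurable_G3))
  have he : (fun q => ENNReal.ofReal (pX (G3 q).1) * ENNReal.ofReal (pY (G3 q).2)) =
      fun q => ENNReal.ofReal (rr pX pY q) := by
    funext q
    rw [← ENNReal.ofReal_mul (nX _)]; rfl
  rw [he] at h
  have hae := cross_ae _ _ (measurable_fst.comp (measurable_F3.comp (hXm.prodMk hYm)))
    (measurable_snd.comp (measurable_F3.comp (hXm.prodMk hYm))) hind _ hmr.ennreal_ofReal h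
  let W : Set (ℝ × ℝ) := {q | q.1 ∈ Ioo (-c₂) c₁ ∧ -c₁ < q.2 ∧ q.1 + q.2 ≠ 0}
  have hW : IsOpen W := by
    have o1 : IsOpen {q : ℝ × ℝ | -c₁ < q.2} := isOpen_lt (by fun_prop) (by fun_prop)
    have o2 : IsOpen {q : ℝ × ℝ | q.1 + q.2 ≠ 0} := isOpen_ne_fun (by fun_prop) (by fun_prop)
    exact (isOpen_Ioo.preimage continuous_fst).inter (o1.inter o2)
  have hWc : ContinuousOn (rr pX pY) W := fun q hq =>
    (rr_cont c₁ c₂ pX pY hXc hYc q hq.1 hq.2.1 hq.2.2).continuousWithinAt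
  let T : Set ((ℝ × ℝ) × (ℝ × ℝ)) := ((fun z => z.1) ⁻¹' W ∩ (fun z => z.2) ⁻¹' W) ∩
    ((fun z => (z.1.1, z.2.2)) ⁻¹' W ∩ (fun z => (z.2.1, z.1.2)) ⁻¹' W)
  have hT : IsOpen T :=
    ((hW.preimage (by fun_prop)).inter (hW.preimage (by fun_prop))).inter
      ((hW.preimage (by fun_prop)).inter (hW.preimage (by fun_prop)))
  have hfin := Measure.eqOn_open_of_ae_eq (μ := (volume : Measure ((ℝ × ℝ) × (ℝ × ℝ)))) (U := T)
    (f := fun z => rr pX pY z.1 * rr pX pY z.2)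
    (g := fun z => rr pX pY (z.1.1, z.2.2) * rr pX pY (z.2.1, z.1.2))
    (by
      refine ae_restrict_of_ae ?_
      filter_upwards [hae] with z hz
      rw [← ENNReal.ofReal_mul (hr0 _), ← ENNReal.ofReal_mul (hr0 _),
        ENNReal.ofReal_eq_ofReal_iff (mul_nonneg (hr0 _) (hr0 _))
          (mul_nonneg (hr0 _) (hr0 _))] at hz
      exact hz) hT
    ((hWc.comp (f := fun z : (ℝ × ℝ) × (ℝ × ℝ) => z.1) (by fun_prop) (fun z hz => hz.1.1)).mul
      (hWc.comp (f := fun z : (ℝ × ℝ) × (ℝ × ℝ) => z.2) (by fun_prop) (fun z hz => hz.1.2)))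
    ((hWc.comp (f := fun z : (ℝ × ℝ) × (ℝ × ℝ) => (z.1.1, z.2.2)) (by fun_prop)
        (fun z hz => hz.2.1)).mul
      (hWc.comp (f := fun z : (ℝ × ℝ) × (ℝ × ℝ) => (z.2.1, z.1.2)) (by fun_prop)
        (fun z hz => hz.2.2)))
  exact hfin (x := ((u, v), (u', v'))) ⟨⟨⟨hu, hv, h1⟩, ⟨hu', hv', h2⟩⟩, ⟨hu, hv', h3⟩, ⟨hu', hv, h4⟩⟩

lemma exp_of_logDeriv (s : Set ℝ) (hs : IsOpen s) (hs' : IsPreconnected s) (hne : s.Nonempty)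
    (f : ℝ → ℝ) (hf : ∀ x ∈ s, DifferentiableAt ℝ f x) (hpos : ∀ x ∈ s, 0 < f x) (l : ℝ)
    (h : ∀ x ∈ s, deriv f x / f x = -l) :
    ∃ K : ℝ, 0 < K ∧ ∀ x ∈ s, f x = K * Real.exp (-(l * x)) := by
  obtain ⟨x0, hx0⟩ := hne
  have hd : ∀ x ∈ s, HasDerivAt (fun x => f x * Real.exp (l * x)) 0 x := by
    intro x hx
    have h1 := (hf x hx).hasDerivAt.mul (((hasDerivAt_id x).const_mul l).exp)
    have := h x hx
    rw [div_eq_iff (hpos x hx).ne'] at this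
    refine (h1.congr_deriv ?_ : HasDerivAt _ _ x)
    rw [this]
    simp only [id, mul_one]
    ring
  refine ⟨f x0 * Real.exp (l * x0), mul_pos (hpos _ hx0) (Real.exp_pos _), fun x hx => ?_⟩
  have := hs.is_const_of_deriv_eq_zero hs' (f := fun x => f x * Real.exp (l * x))
    (fun x hx => (hd x hx).differentiableAt.differentiableWithinAt)
    (fun x hx => (hd x hx).deriv) hx hx0
  rw [← this, mul_assoc, ← Real.exp_add]
  simp

lemma analytic (c₁ c₂ : ℝ) (hc₁ : 0 < c₁) (hc₂ : 0 < c₂) (fX fY : ℝ → ℝ)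
    (pX : ∀ x ∈ Ioo (-c₁) c₂, 0 < fX x) (pY : ∀ y ∈ Ioi (-c₂), 0 < fY y)
    (dX : ∀ x ∈ Ioo (-c₁) c₂, DifferentiableAt ℝ fX x)
    (dY : ∀ y ∈ Ioi (-c₂), DifferentiableAt ℝ fY y)
    (rel1 : ∀ a b, -c₁ < a → a < b → b < c₂ → fX a * fY (b - 2 * a) = fX b * fY (-a))
    (rel2 : ∀ v v', 0 < v → 0 < v' → fY v * fY (v' + c₁) = fY v' * fY (v + c₁)) :
    ∃ l KX KY : ℝ, 0 < KX ∧ 0 < KY ∧ (∀ x ∈ Ioo (-c₁) c₂, fX x = KX * Real.exp (-(l * x))) ∧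
      ∀ y ∈ Ioi (-c₂), fY y = KY * Real.exp (-(l * y)) := by
  have L1 : ∀ a b, -c₁ < a → a < b → b < c₂ →
      deriv fY (b - 2 * a) / fY (b - 2 * a) = deriv fX b / fX b := by
    intro a b h1 h2 h3
    have hy : b - 2 * a ∈ Ioi (-c₂) := by simp only [mem_Ioi]; linarith
    have hb : b ∈ Ioo (-c₁) c₂ := ⟨by linarith, h3⟩
    have d1 : HasDerivAt (fun t => fX a * fY (t - 2 * a)) (fX a * deriv fY (b - 2 * a)) b := by
      have := (dY _ hy).hasDerivAt.comp_sub_const b (2 * a)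
      exact this.const_mul _
    have d2 : HasDerivAt (fun t => fX t * fY (-a)) (deriv fX b * fY (-a)) b :=
      (dX _ hb).hasDerivAt.mul_const _
    have he : (fun t => fX a * fY (t - 2 * a)) =ᶠ[nhds b] (fun t => fX t * fY (-a)) := by
      filter_upwards [Ioo_mem_nhds h2 h3] with t ht
      exact rel1 a t h1 ht.1 ht.2
    have := (d2.congr_of_eventuallyEq he).unique d1
    have r := rel1 a b h1 h2 h3
    have q1 := pY _ hy
    have q2 := pX _ hb
    have q3 : 0 < fX a := pX _ ⟨h1, by linarith⟩
    have q4 : 0 < fY (-a) := pY _ (by simp only [mem_Ioi]; linarith)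
    rw [div_eq_div_iff q1.ne' q2.ne']
    have : (fX a * fY (-a)) * (deriv fY (b - 2 * a) * fX b) =
      (fX a * fY (-a)) * (deriv fX b * fY (b - 2 * a)) := by
      linear_combination (-(fY (-a) * fX b)) * this - deriv fX b * fY (-a) * r
    exact mul_left_cancel₀ (mul_pos q3 q4).ne' this
  have L2 : ∀ y, c₁ < y → deriv fY y / fY y = deriv fY (y - c₁) / fY (y - c₁) := by
    intro y hy
    have q1 : 0 < fY y := pY _ (by simp only [mem_Ioi]; linarith)
    have q2 : 0 < fY (y - c₁) := pY _ (by simp only [mem_Ioi]; linarith)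
    have q3 : 0 < fY 1 := pY _ (by simp only [mem_Ioi]; linarith)
    have q4 : 0 < fY (1 + c₁) := pY _ (by simp only [mem_Ioi]; linarith)
    have d1 : HasDerivAt (fun t => fY 1 * fY t) (fY 1 * deriv fY y) y :=
      (dY y (by simp only [mem_Ioi]; linarith)).hasDerivAt.const_mul _
    have d2 : HasDerivAt (fun t => fY (t - c₁) * fY (1 + c₁))
        (deriv fY (y - c₁) * fY (1 + c₁)) y :=
      ((dY (y - c₁) (by simp only [mem_Ioi]; linarith)).hasDerivAt.comp_sub_const y c₁).mul_const _
    have rr2 : ∀ t, c₁ < t → fY 1 * fY t = fY (t - c₁) * fY (1 + c₁) := by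
      intro t ht
      have := rel2 1 (t - c₁) one_pos (by linarith)
      rwa [sub_add_cancel] at this
    have he : (fun t => fY 1 * fY t) =ᶠ[nhds y] (fun t => fY (t - c₁) * fY (1 + c₁)) := by
      filter_upwards [Ioi_mem_nhds hy] with t ht
      exact rr2 t ht
    have := (d2.congr_of_eventuallyEq he).unique d1
    have r := rr2 y hy
    rw [div_eq_div_iff q1.ne' q2.ne']
    have : (fY 1 * fY (1 + c₁)) * (deriv fY y * fY (y - c₁)) =
      (fY 1 * fY (1 + c₁)) * (deriv fY (y - c₁) * fY y) := by
      linear_combination (-(fY (1 + c₁) * fY (y - c₁))) * this -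
        deriv fY (y - c₁) * fY (1 + c₁) * r
    exact mul_left_cancel₀ (mul_pos q3 q4).ne' this
  obtain ⟨l, hl⟩ : ∃ l, l = -(deriv fY c₁ / fY c₁) := ⟨_, rfl⟩
  have LX : ∀ b ∈ Ioo (-c₁) c₂, deriv fX b / fX b = -l := by
    intro b hb
    have := L1 ((b - c₁) / 2) b (by linarith [hb.1]) (by linarith [hb.1]) hb.2
    rw [← this, hl, neg_neg]
    congr 2 <;> ring
  have LY0 : ∀ y, -c₂ < y → y < c₂ + 2 * c₁ → deriv fY y / fY y = -l := by
    intro y h1 h2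
    obtain ⟨b, hb1, hb2⟩ := exists_between
      (show max (max (y - 2 * c₁) (-y)) (-c₁) < c₂ by
        rw [max_lt_iff, max_lt_iff]; refine ⟨⟨?_, ?_⟩, ?_⟩ <;> linarith)
    rw [max_lt_iff, max_lt_iff] at hb1
    obtain ⟨⟨h3, h4⟩, h5⟩ := hb1
    rw [← LX b ⟨h5, hb2⟩, ← L1 ((b - y) / 2) b (by linarith) (by linarith) hb2]
    congr 2 <;> ring
  have LYn : ∀ n : ℕ, ∀ y, -c₂ < y → y < c₂ + 2 * c₁ + n * c₁ → deriv fY y / fY y = -l := by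
    intro n
    induction n with
    | zero => intro y h1 h2; exact LY0 y h1 (by simpa using h2)
    | succ n ih =>
      intro y h1 h2
      push_cast at h2
      by_cases h : y < c₂ + 2 * c₁
      · exact LY0 y h1 h
      · rw [L2 y (by linarith)]
        exact ih _ (by linarith) (by linarith)
  have LY : ∀ y ∈ Ioi (-c₂), deriv fY y / fY y = -l := by
    intro y hy
    obtain ⟨n, hn⟩ := exists_nat_gt (y / c₁)
    rw [div_lt_iff₀ hc₁] at hn
    exact LYn n y hy (by linarith)
  obtain ⟨KX, hKX, hKX'⟩ := exp_of_logDeriv _ isOpen_Ioo isPreconnected_Ioo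
    ⟨0, by constructor <;> linarith⟩ fX dX pX l LX
  obtain ⟨KY, hKY, hKY'⟩ := exp_of_logDeriv _ isOpen_Ioi isPreconnected_Ioi
    ⟨0, by simp only [mem_Ioi]; linarith⟩ fY dY pY l LY
  exact ⟨l, KX, KY, hKX, hKY, hKX', hKY'⟩

lemma lintegral_stExp (c₁ c₂ : ℝ) (hc : -c₁ < c₂) (l K : ℝ) (hl : 0 < l) (hK : 0 < K)
    (h : ∫⁻ x in Ioo (-c₁) c₂, ENNReal.ofReal (K * Real.exp (-(l * x))) = 1) :
    K = 1 / ((1 / l) * (Real.exp (-(l * -c₁)) - Real.exp (-(l * c₂)))) := by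
  have hi : IntegrableOn (fun x => K * Real.exp (-(l * x))) (Ioo (-c₁) c₂) :=
    (Continuous.integrableOn_Icc (by fun_prop)).mono_set Ioo_subset_Icc_self
  rw [← ofReal_integral_eq_lintegral_ofReal hi (ae_of_all _ fun x => by positivity),
    ENNReal.ofReal_eq_one, ← integral_Ioc_eq_integral_Ioo,
    ← intervalIntegral.integral_of_le hc.le] at h
  have hd : ∀ x ∈ uIcc (-c₁) c₂,
      HasDerivAt (fun x => -(K / l) * Real.exp (-(l * x))) (K * Real.exp (-(l * x))) x := by
    intro x _
    have := ((((hasDerivAt_id x).const_mul l).neg).exp).const_mul (-(K / l))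
    refine (this.congr_deriv ?_ : HasDerivAt _ _ x)
    simp only [id, Pi.neg_apply]
    field_simp
  rw [intervalIntegral.integral_eq_sub_of_hasDerivAt hd
    (Continuous.intervalIntegrable (by fun_prop) _ _)] at h
  have hlt : Real.exp (-(l * c₂)) < Real.exp (-(l * -c₁)) := Real.exp_lt_exp.2 (by nlinarith)
  rw [eq_div_iff (mul_pos (by positivity) (by linarith)).ne']
  refine Eq.trans ?_ h
  ring

lemma lintegral_sExp (c : ℝ) (l K : ℝ) (hK : 0 < K)
    (h : ∫⁻ x in Ioi c, ENNReal.ofReal (K * Real.exp (-(l * x))) = 1) :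
    0 < l ∧ K = 1 / ((1 / l) * Real.exp (-(l * c))) := by
  have hl : 0 < l := by
    by_contra hl
    push Not at hl
    have : ∫⁻ x in Ioi c, ENNReal.ofReal (K * Real.exp (-(l * c))) ≤ 1 := by
      rw [← h]
      refine setLIntegral_mono (by fun_prop) fun x hx => ?_
      refine ENNReal.ofReal_le_ofReal (mul_le_mul_of_nonneg_left (Real.exp_le_exp.2 ?_) hK.le)
      have : c < x := hx
      nlinarith
    rw [setLIntegral_const, Real.volume_Ioi, ENNReal.mul_top
      (by rw [Ne, ENNReal.ofReal_eq_zero, not_le]; positivity)] at this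
    simp at this
  refine ⟨hl, ?_⟩
  have hi : IntegrableOn (fun x => K * Real.exp (-(l * x))) (Ioi c) := by
    have := (integrableOn_exp_mul_Ioi (show -l < 0 by linarith) c).const_mul K
    simp only [neg_mul] at this
    exact this
  rw [← ofReal_integral_eq_lintegral_ofReal hi (ae_of_all _ fun x => by positivity),
    ENNReal.ofReal_eq_one, integral_const_mul] at h
  have := integral_exp_mul_Ioi (show -l < 0 by linarith) c
  simp only [neg_mul] at this
  rw [this] at h
  rw [eq_div_iff (by positivity)]
  refine Eq.trans ?_ h
  field_simp

lemma forward {Ω : Type*} [MeasureSpace Ω] [IsProbabilityMeasure (ℙ : Measure Ω)]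
    (c₁ c₂ : ℝ) (hc₁ : 0 < c₁) (hc₂ : 0 < c₂)
    (X Y : Ω → ℝ) (hXm : Measurable X) (hYm : Measurable Y)
    (hIndep : IndepFun X Y ℙ)
    (fX fY : ℝ → ℝ)
    (hfX : Measure.map X ℙ = volume.withDensity (fun x => ENNReal.ofReal (fX x)))
    (hfY : Measure.map Y ℙ = volume.withDensity (fun x => ENNReal.ofReal (fY x)))
    (hfXpos : ∀ x ∈ Icc (-c₁) c₂, 0 < fX x)
    (hfXzero : ∀ x ∉ Icc (-c₁) c₂, fX x = 0)
    (hfYpos : ∀ y ∈ Ici (-c₂), 0 < fY y)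
    (hfYzero : ∀ y ∉ Ici (-c₂), fY y = 0)
    (dX : ∀ x ∈ Ioo (-c₁) c₂, DifferentiableAt ℝ fX x)
    (dY : ∀ y ∈ Ioi (-c₂), DifferentiableAt ℝ fY y)
    (hind : IndepFun (fun ω => (F3 (X ω, Y ω)).1) (fun ω => (F3 (X ω, Y ω)).2) ℙ) :
      ∃ l : ℝ, 0 < l ∧
        Measure.map X ℙ =
          volume.withDensity (fun x => ENNReal.ofReal (stExpPdf l (-c₁) c₂ x)) ∧
        Measure.map Y ℙ =
          volume.withDensity (fun y => ENNReal.ofReal (sExpPdf l (-c₂) y)) := by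
  classical
  let pX : ℝ → ℝ := (Ioo (-c₁) c₂).piecewise fX (fun _ => 0)
  let pY : ℝ → ℝ := (Ioi (-c₂)).piecewise fY (fun _ => 0)
  have eX : ∀ x ∈ Ioo (-c₁) c₂, pX x = fX x := fun x hx => piecewise_eq_of_mem _ _ _ hx
  have eY : ∀ x ∈ Ioi (-c₂), pY x = fY x := fun x hx => piecewise_eq_of_mem _ _ _ hx
  have mX : Measurable pX := ContinuousOn.measurable_piecewise
    (fun x hx => (dX x hx).continuousAt.continuousWithinAt) continuousOn_const measurableSet_Ioo
  have mY : Measurable pY := ContinuousOn.measurable_piecewise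
    (fun x hx => (dY x hx).continuousAt.continuousWithinAt) continuousOn_const measurableSet_Ioi
  have cX : ∀ x ∈ Ioo (-c₁) c₂, ContinuousAt pX x := fun x hx =>
    (dX x hx).continuousAt.congr (by
      filter_upwards [isOpen_Ioo.mem_nhds hx] with t ht using (eX t ht).symm)
  have cY : ∀ x ∈ Ioi (-c₂), ContinuousAt pY x := fun x hx =>
    (dY x hx).continuousAt.congr (by
      filter_upwards [isOpen_Ioi.mem_nhds hx] with t ht using (eY t ht).symm)
  have posX : ∀ x ∈ Ioo (-c₁) c₂, 0 < fX x := fun x hx => hfXpos x (Ioo_subset_Icc_self hx)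
  have posY : ∀ x ∈ Ioi (-c₂), 0 < fY x := fun x hx => hfYpos x (Ioi_subset_Ici_self hx)
  have nX : ∀ x, 0 ≤ pX x := by
    intro x
    by_cases h : x ∈ Ioo (-c₁) c₂
    · rw [eX x h]; exact (posX x h).le
    · have e : pX x = 0 := piecewise_eq_of_notMem _ _ _ h
      exact e.ge
  have nY : ∀ x, 0 ≤ pY x := by
    intro x
    by_cases h : x ∈ Ioi (-c₂)
    · rw [eY x h]; exact (posY x h).le
    · have e : pY x = 0 := piecewise_eq_of_notMem _ _ _ h
      exact e.ge
  have aeX : ∀ᵐ x : ℝ, x ≠ -c₁ ∧ x ≠ c₂ :=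
    (Measure.ae_ne volume (-c₁)).and (Measure.ae_ne volume c₂)
  have aeY : ∀ᵐ x : ℝ, x ≠ -c₂ := Measure.ae_ne volume _
  have hX : Measure.map X ℙ = volume.withDensity (fun x => ENNReal.ofReal (pX x)) := by
    rw [hfX]
    refine withDensity_congr_ae ?_
    filter_upwards [aeX] with x hx
    by_cases h : x ∈ Ioo (-c₁) c₂
    · rw [eX x h]
    · have e : pX x = 0 := piecewise_eq_of_notMem _ _ _ h
      rw [e, hfXzero x (fun h' => h ⟨lt_of_le_of_ne h'.1 hx.1.symm, lt_of_le_of_ne h'.2 hx.2⟩)]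
  have hY : Measure.map Y ℙ = volume.withDensity (fun x => ENNReal.ofReal (pY x)) := by
    rw [hfY]
    refine withDensity_congr_ae ?_
    filter_upwards [aeY] with x hx
    by_cases h : x ∈ Ioi (-c₂)
    · rw [eY x h]
    · have e : pY x = 0 := piecewise_eq_of_notMem _ _ _ h
      rw [e, hfYzero x (fun h' => h (lt_of_le_of_ne h' hx.symm))]
  have hcr := cross c₁ c₂ X Y hXm hYm hIndep pX pY mX mY nX nY hX hY cX cY hind
  have rA : ∀ u v, u ∈ Ioo (-c₂) c₁ → 0 < u + v → rr pX pY (u, v) = fX (-u) * fY (v + 2 * u) := by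
    intro u v hu h
    unfold rr G3
    simp only [h.le, if_true]
    rw [eX _ ⟨by linarith [hu.2], by linarith [hu.1]⟩, eY _ (by
      simp only [mem_Ioi]; linarith [hu.1])]
  have rB : ∀ u v, u ∈ Ioo (-c₂) c₁ → -c₁ < v → u + v < 0 → rr pX pY (u, v) = fX v * fY u := by
    intro u v hu hv h
    unfold rr G3
    simp only [not_le.2 h, if_false]
    rw [eX _ ⟨hv, by linarith [hu.1]⟩, eY _ hu.1]
  have rel1 : ∀ a b, -c₁ < a → a < b → b < c₂ → fX a * fY (b - 2 * a) = fX b * fY (-a) := by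
    intro a b h1 h2 h3
    obtain ⟨u, hu1, hu2⟩ := exists_between (show -c₂ < -b by linarith)
    obtain ⟨v, hv1, hv2⟩ := exists_between h1
    have hu : u ∈ Ioo (-c₂) c₁ := ⟨hu1, by linarith⟩
    have hu' : -a ∈ Ioo (-c₂) c₁ := ⟨by linarith, by linarith⟩
    have hb : -c₁ < b := by linarith
    have s1 : u + v < 0 := by linarith
    have s2 : 0 < -a + b := by linarith
    have s3 : u + b < 0 := by linarith
    have s4 : -a + v < 0 := by linarith
    have := hcr u v (-a) b hu hu' hv1 hb s1.ne s2.ne' s3.ne s4.ne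
    rw [rB u v hu hv1 s1, rA (-a) b hu' s2, rB u b hu hb s3, rB (-a) v hu' hv1 s4, neg_neg] at this
    have q1 : 0 < fX v := posX v ⟨hv1, by linarith⟩
    have q2 : 0 < fY u := posY u hu1
    refine mul_left_cancel₀ (mul_pos q1 q2).ne' ?_
    have e : b - 2 * a = b + 2 * -a := by ring
    rw [e]
    linear_combination this
  have rel2 : ∀ v v', 0 < v → 0 < v' → fY v * fY (v' + c₁) = fY v' * fY (v + c₁) := by
    intro v v' hv hv'
    have hu : (0 : ℝ) ∈ Ioo (-c₂) c₁ := ⟨by linarith, by linarith⟩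
    have hu' : c₁ / 2 ∈ Ioo (-c₂) c₁ := ⟨by linarith, by linarith⟩
    have s1 : 0 < 0 + v := by linarith
    have s2 : 0 < c₁ / 2 + v' := by linarith
    have s3 : 0 < 0 + v' := by linarith
    have s4 : 0 < c₁ / 2 + v := by linarith
    have := hcr 0 v (c₁ / 2) v' hu hu' (by linarith) (by linarith) s1.ne' s2.ne' s3.ne' s4.ne'
    rw [rA _ _ hu s1, rA _ _ hu' s2, rA _ _ hu s3, rA _ _ hu' s4] at this
    have e : 2 * (c₁ / 2) = c₁ := by ring
    rw [e, mul_zero, add_zero, add_zero] at this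
    have q1 : 0 < fX (-0) := posX _ ⟨by linarith, by linarith⟩
    have q2 : 0 < fX (-(c₁ / 2)) := posX _ ⟨by linarith, by linarith⟩
    refine mul_left_cancel₀ (mul_pos q1 q2).ne' ?_
    linear_combination this
  obtain ⟨l, KX, KY, hKX, hKY, fmX, fmY⟩ :=
    analytic c₁ c₂ hc₁ hc₂ fX fY posX posY dX dY rel1 rel2
  have hpX : pX = (Ioo (-c₁) c₂).indicator (fun x => KX * Real.exp (-(l * x))) := by
    funext x
    by_cases h : x ∈ Ioo (-c₁) c₂
    · rw [eX x h, indicator_of_mem h, fmX x h]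
    · rw [indicator_of_notMem h]; exact piecewise_eq_of_notMem _ _ _ h
  have hpY : pY = (Ioi (-c₂)).indicator (fun x => KY * Real.exp (-(l * x))) := by
    funext x
    by_cases h : x ∈ Ioi (-c₂)
    · rw [eY x h, indicator_of_mem h, fmY x h]
    · rw [indicator_of_notMem h]; exact piecewise_eq_of_notMem _ _ _ h
  have ofInd : ∀ (s : Set ℝ) (g : ℝ → ℝ) (x : ℝ), ENNReal.ofReal (s.indicator g x) =
      s.indicator (fun x => ENNReal.ofReal (g x)) x := by
    intro s g x
    by_cases h : x ∈ s <;> simp [h]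
  have IX : ∫⁻ x in Ioo (-c₁) c₂, ENNReal.ofReal (KX * Real.exp (-(l * x))) = 1 := by
    have h1 := congrArg (fun m => m univ) hX
    simp only [withDensity_apply _ MeasurableSet.univ, Measure.restrict_univ,
      Measure.map_apply hXm MeasurableSet.univ, preimage_univ, measure_univ, hpX, ofInd] at h1
    rw [lintegral_indicator measurableSet_Ioo] at h1
    exact h1.symm
  have IY : ∫⁻ x in Ioi (-c₂), ENNReal.ofReal (KY * Real.exp (-(l * x))) = 1 := by
    have h1 := congrArg (fun m => m univ) hY
    simp only [withDensity_apply _ MeasurableSet.univ, Measure.restrict_univ,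
      Measure.map_apply hYm MeasurableSet.univ, preimage_univ, measure_univ, hpY, ofInd] at h1
    rw [lintegral_indicator measurableSet_Ioi] at h1
    exact h1.symm
  obtain ⟨hl, eKY⟩ := lintegral_sExp _ l KY hKY IY
  have eKX := lintegral_stExp c₁ c₂ (by linarith) l KX hl hKX IX
  refine ⟨l, hl, ?_, ?_⟩
  · rw [hX]
    refine withDensity_congr_ae ?_
    filter_upwards [aeX] with x hx
    congr 1
    rw [hpX]
    unfold stExpPdf
    by_cases h : x ∈ Ioo (-c₁) c₂
    · rw [indicator_of_mem h, if_pos ⟨h.1.le, h.2.le⟩, eKX, one_div_mul_eq_div]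
    · rw [indicator_of_notMem h, if_neg (fun h' => h
        ⟨lt_of_le_of_ne h'.1 hx.1.symm, lt_of_le_of_ne h'.2 hx.2⟩)]
  · rw [hY]
    refine withDensity_congr_ae ?_
    filter_upwards [aeY] with x hx
    congr 1
    rw [hpY]
    unfold sExpPdf
    by_cases h : x ∈ Ioi (-c₂)
    · rw [indicator_of_mem h, if_pos (le_of_lt h), eKY, one_div_mul_eq_div]
    · rw [indicator_of_notMem h, if_neg (fun h' => h (lt_of_le_of_ne h' hx.symm))]

theorem sExp_characterization
    {Ω : Type*} [MeasureSpace Ω] [IsProbabilityMeasure (ℙ : Measure Ω)]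
    (c₁ c₂ : ℝ) (hc₁ : 0 < c₁) (hc₂ : 0 < c₂)
    (X Y : Ω → ℝ) (hXm : Measurable X) (hYm : Measurable Y)
    (hIndep : IndepFun X Y ℙ)
    (fX fY : ℝ → ℝ)
    (hfX : Measure.map X ℙ = volume.withDensity (fun x => ENNReal.ofReal (fX x)))
    (hfY : Measure.map Y ℙ = volume.withDensity (fun x => ENNReal.ofReal (fY x)))
    (hfXpos : ∀ x ∈ Icc (-c₁) c₂, 0 < fX x)
    (hfXzero : ∀ x ∉ Icc (-c₁) c₂, fX x = 0)
    (hfYpos : ∀ y ∈ Ici (-c₂), 0 < fY y)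
    (hfYzero : ∀ y ∉ Ici (-c₂), fY y = 0)
    (hfXdiff : ∀ x ∈ Ioo (-c₁) c₂,
      DifferentiableAt ℝ fX x ∧ DifferentiableAt ℝ (deriv fX) x)
    (hfYdiff : ∀ y ∈ Ioi (-c₂),
      DifferentiableAt ℝ fY y ∧ DifferentiableAt ℝ (deriv fY) y) :
    IndepFun (fun ω => (F3 (X ω, Y ω)).1) (fun ω => (F3 (X ω, Y ω)).2) ℙ ↔
      ∃ l : ℝ, 0 < l ∧
        Measure.map X ℙ =
          volume.withDensity (fun x => ENNReal.ofReal (stExpPdf l (-c₁) c₂ x)) ∧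
        Measure.map Y ℙ =
          volume.withDensity (fun y => ENNReal.ofReal (sExpPdf l (-c₂) y)) := by
  constructor
  · exact forward c₁ c₂ hc₁ hc₂ X Y hXm hYm hIndep fX fY hfX hfY hfXpos hfXzero hfYpos hfYzero
      (fun x hx => (hfXdiff x hx).1) (fun y hy => (hfYdiff y hy).1)
  · rintro ⟨l, hl, h1, h2⟩
    exact backward c₁ c₂ X Y hXm hYm hIndep l h1 h2 hl (by linarith)
end

section
/- Let c₁, c₂ > 0 and let F₃(x,y) = (min{−x,y}, y + x − min{−x,y}). If X and Y are independent ℝ-valued random variables with X ~ stExp(λ, −c₁, c₂) and Y ~ sExp(λ, −c₂) for some λ > 0, then (U,V) := F₃(X,Y) are independent, with U ~ stExp(λ, −c₂, c₁) and V ~ sExp(λ, −c₁). -/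
open MeasureTheory ProbabilityTheory Set

theorem F3_mp : MeasurePreserving F3 (volume : Measure (ℝ × ℝ)) volume := by
  have hF : Measurable F3 := by unfold F3; fun_prop
  have hS : MeasurePreserving (Prod.swap : ℝ × ℝ → ℝ × ℝ) volume volume :=
    Measure.measurePreserving_swap
  have hA : MeasurePreserving (fun p : ℝ × ℝ => (-p.1, p.2 + 2 * p.1)) volume volume := by
    have := (Measure.measurePreserving_neg (volume : Measure ℝ)).skew_product
      (μc := (volume : Measure ℝ)) (μd := (volume : Measure ℝ))
      (g := fun x y => y + 2 * x) (by fun_prop)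
      (Filter.Eventually.of_forall fun x => (measurePreserving_add_right volume (2 * x)).map_eq)
    exact this
  have hD : MeasurableSet {p : ℝ × ℝ | -p.1 ≤ p.2} :=
    measurableSet_le (by fun_prop) (by fun_prop)
  refine ⟨hF, ?_⟩
  ext E hE
  rw [Measure.map_apply hF hE, ← measure_inter_add_diff (F3 ⁻¹' E) hD,
    ← measure_inter_add_diff E hD]
  congr 1
  · rw [← hA.measure_preimage (hE.inter hD).nullMeasurableSet]
    congr 1
    ext ⟨x, y⟩
    simp only [mem_inter_iff, mem_preimage, mem_setOf_eq, F3]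
    constructor
    · rintro ⟨h, h2⟩
      rw [min_eq_left h2] at h
      refine ⟨?_, by linarith⟩
      convert h using 2
      ring
    · rintro ⟨h, h2⟩
      have h2 : -x ≤ y := by linarith
      refine ⟨?_, h2⟩
      rw [min_eq_left h2]
      convert h using 2
      ring
  · rw [← hS.measure_preimage (hE.diff hD).nullMeasurableSet]
    congr 1
    ext ⟨x, y⟩
    simp only [mem_diff, mem_preimage, mem_setOf_eq, F3, Prod.swap_prod_mk, not_le]
    constructor
    · rintro ⟨h, h2⟩
      rw [min_eq_right h2.le] at h
      refine ⟨?_, by linarith⟩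
      convert h using 2
      ring
    · rintro ⟨h, h2⟩
      have h2 : y < -x := by linarith
      refine ⟨?_, h2⟩
      rw [min_eq_right h2.le]
      convert h using 2
      ring

theorem sExpPdf_meas (l c : ℝ) : Measurable (sExpPdf l c) := by
  unfold sExpPdf
  exact Measurable.ite measurableSet_Ici (by fun_prop) (by fun_prop)

theorem stExpPdf_meas (l c d : ℝ) : Measurable (stExpPdf l c d) := by
  unfold stExpPdf
  exact Measurable.ite (measurableSet_Icc (a := c) (b := d)) (by fun_prop) (by fun_prop)

theorem stExpPdf_nonneg (l c d : ℝ) (hl : 0 < l) (x : ℝ) : 0 ≤ stExpPdf l c d x := by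
  unfold stExpPdf
  split_ifs with h
  · have : Real.exp (-(l * d)) ≤ Real.exp (-(l * c)) := by
      apply Real.exp_le_exp.2
      nlinarith [h.1.trans h.2]
    have : 0 ≤ Real.exp (-(l * c)) - Real.exp (-(l * d)) := by linarith
    positivity
  · exact le_rfl

theorem dens_eq (l c₁ c₂ : ℝ) (p : ℝ × ℝ) :
    stExpPdf l (-c₁) c₂ p.1 * sExpPdf l (-c₂) p.2 =
      stExpPdf l (-c₂) c₁ (F3 p).1 * sExpPdf l (-c₁) (F3 p).2 := by
  obtain ⟨x, y⟩ := p
  have hs : (F3 (x, y)).1 + (F3 (x, y)).2 = x + y := by simp only [F3]; ring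
  have hiff : ((-c₁ ≤ x ∧ x ≤ c₂) ∧ -c₂ ≤ y) ↔
      ((-c₂ ≤ (F3 (x, y)).1 ∧ (F3 (x, y)).1 ≤ c₁) ∧ -c₁ ≤ (F3 (x, y)).2) := by
    simp only [F3]
    rcases le_total (-x) y with h | h
    · rw [min_eq_left h]
      constructor
      · rintro ⟨⟨a, b⟩, c⟩
        refine ⟨⟨?_, ?_⟩, ?_⟩ <;> linarith
      · rintro ⟨⟨a, b⟩, c⟩
        refine ⟨⟨?_, ?_⟩, ?_⟩ <;> linarith
    · rw [min_eq_right h]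
      constructor
      · rintro ⟨⟨a, b⟩, c⟩
        refine ⟨⟨?_, ?_⟩, ?_⟩ <;> linarith
      · rintro ⟨⟨a, b⟩, c⟩
        refine ⟨⟨?_, ?_⟩, ?_⟩ <;> linarith
  generalize F3 (x, y) = q at hs hiff
  obtain ⟨u, v⟩ := q
  simp only [stExpPdf, sExpPdf] at *
  rw [ite_zero_mul_ite_zero, ite_zero_mul_ite_zero]
  refine if_congr hiff ?_ rfl
  rw [div_mul_div_comm, div_mul_div_comm, ← Real.exp_add, ← Real.exp_add]
  congr 1
  · congr 1
    linear_combination l * hs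
  · have h1 : Real.exp (-(l * -c₁)) * Real.exp (-(l * c₁)) = 1 := by
      rw [← Real.exp_add]; simp
    have h2 : Real.exp (-(l * -c₂)) * Real.exp (-(l * c₂)) = 1 := by
      rw [← Real.exp_add]; simp
    linear_combination (1 / l * (1 / l)) * (h1 - h2)

theorem sExp_shift (l c d : ℝ) :
    ∫⁻ x, ENNReal.ofReal (sExpPdf l c x) = ∫⁻ x, ENNReal.ofReal (sExpPdf l d x) := by
  rw [← lintegral_add_right_eq_self (fun x => ENNReal.ofReal (sExpPdf l d x)) (d - c)]
  congr 1
  ext x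
  congr 1
  unfold sExpPdf
  refine if_congr (by constructor <;> intro h <;> linarith) ?_ rfl
  rw [div_mul_eq_div_div, div_mul_eq_div_div, div_right_comm, ← Real.exp_sub,
    div_right_comm (Real.exp (-(l * (x + (d - c))))), ← Real.exp_sub]
  congr 2
  ring

theorem sExp_if_part
    {Ω : Type*} [MeasureSpace Ω] [IsProbabilityMeasure (ℙ : Measure Ω)]
    (c₁ c₂ : ℝ) (hc₁ : 0 < c₁) (hc₂ : 0 < c₂)
    (X Y : Ω → ℝ) (hXm : Measurable X) (hYm : Measurable Y)
    (hIndep : IndepFun X Y ℙ)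
    (l : ℝ) (hl : 0 < l)
    (hX : Measure.map X ℙ =
      volume.withDensity (fun x => ENNReal.ofReal (stExpPdf l (-c₁) c₂ x)))
    (hY : Measure.map Y ℙ =
      volume.withDensity (fun y => ENNReal.ofReal (sExpPdf l (-c₂) y))) :
    IndepFun (fun ω => (F3 (X ω, Y ω)).1) (fun ω => (F3 (X ω, Y ω)).2) ℙ ∧
      Measure.map (fun ω => (F3 (X ω, Y ω)).1) ℙ =
        volume.withDensity (fun u => ENNReal.ofReal (stExpPdf l (-c₂) c₁ u)) ∧
      Measure.map (fun ω => (F3 (X ω, Y ω)).2) ℙ =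
        volume.withDensity (fun v => ENNReal.ofReal (sExpPdf l (-c₁) v)) := by
  have hm1 : ∀ c d, Measurable (fun x => ENNReal.ofReal (stExpPdf l c d x)) :=
    fun c d => (stExpPdf_meas l c d).ennreal_ofReal
  have hm2 : ∀ c, Measurable (fun x => ENNReal.ofReal (sExpPdf l c x)) :=
    fun c => (sExpPdf_meas l c).ennreal_ofReal
  have hF : Measurable F3 := F3_mp.measurable
  have hXY : Measurable (fun ω => (X ω, Y ω)) := hXm.prodMk hYm
  have pY : IsProbabilityMeasure
      (volume.withDensity (fun y => ENNReal.ofReal (sExpPdf l (-c₂) y))) := by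
    rw [← hY]; exact Measure.isProbabilityMeasure_map hYm.aemeasurable
  have pV : IsProbabilityMeasure
      (volume.withDensity (fun y => ENNReal.ofReal (sExpPdf l (-c₁) y))) := by
    constructor
    have := pY.measure_univ
    rw [withDensity_apply _ MeasurableSet.univ, Measure.restrict_univ] at this ⊢
    rw [sExp_shift l (-c₁) (-c₂), this]
  have key : Measure.map (fun ω => F3 (X ω, Y ω)) ℙ =
      (volume.withDensity (fun u => ENNReal.ofReal (stExpPdf l (-c₂) c₁ u))).prod
      (volume.withDensity (fun v => ENNReal.ofReal (sExpPdf l (-c₁) v))) := by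
    have h1 : Measure.map (fun ω => F3 (X ω, Y ω)) ℙ =
        Measure.map F3 (Measure.map (fun ω => (X ω, Y ω)) ℙ) := by
      rw [Measure.map_map hF hXY]; rfl
    rw [h1, (indepFun_iff_map_prod_eq_prod_map_map hXm.aemeasurable hYm.aemeasurable).1 hIndep,
      hX, hY, prod_withDensity (hm1 _ _) (hm2 _), prod_withDensity (hm1 _ _) (hm2 _)]
    ext E hE
    rw [Measure.map_apply hF hE, withDensity_apply _ (hF hE), withDensity_apply _ hE]
    rw [← Measure.volume_eq_prod]
    refine Eq.trans ?_ (F3_mp.setLIntegral_comp_preimage hE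
      (((hm1 (-c₂) c₁).comp measurable_fst).mul ((hm2 (-c₁)).comp measurable_snd)))
    refine lintegral_congr fun p => ?_
    change ENNReal.ofReal (stExpPdf l (-c₁) c₂ p.1) * ENNReal.ofReal (sExpPdf l (-c₂) p.2) =
      ENNReal.ofReal (stExpPdf l (-c₂) c₁ (F3 p).1) * ENNReal.ofReal (sExpPdf l (-c₁) (F3 p).2)
    rw [← ENNReal.ofReal_mul (stExpPdf_nonneg _ _ _ hl _),
      ← ENNReal.ofReal_mul (stExpPdf_nonneg _ _ _ hl _), dens_eq]
  have hFm : Measurable (fun ω => F3 (X ω, Y ω)) := hF.comp hXY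
  have pU : IsProbabilityMeasure
      (volume.withDensity (fun u => ENNReal.ofReal (stExpPdf l (-c₂) c₁ u))) := by
    constructor
    have h := (Measure.isProbabilityMeasure_map (μ := (ℙ : Measure Ω))
      hFm.aemeasurable).measure_univ
    rw [key, ← univ_prod_univ, Measure.prod_prod, pV.measure_univ, mul_one] at h
    exact h
  have hU : Measure.map (fun ω => (F3 (X ω, Y ω)).1) ℙ =
      volume.withDensity (fun u => ENNReal.ofReal (stExpPdf l (-c₂) c₁ u)) := by
    have h := congrArg Measure.fst key
    rw [Measure.fst_prod, Measure.fst, Measure.map_map measurable_fst hFm] at h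
    exact h
  have hV : Measure.map (fun ω => (F3 (X ω, Y ω)).2) ℙ =
      volume.withDensity (fun v => ENNReal.ofReal (sExpPdf l (-c₁) v)) := by
    have h := congrArg Measure.snd key
    rw [Measure.snd_prod, Measure.snd, Measure.map_map measurable_snd hFm] at h
    exact h
  refine ⟨?_, hU, hV⟩
  rw [indepFun_iff_map_prod_eq_prod_map_map hFm.fst.aemeasurable hFm.snd.aemeasurable, hU, hV]
  exact key
end

section
/- Let F₂(x,y) = (min{x,0} − y, min{x,y,0} − x − y), and let O ⊂ ℝ² be the union of the five open regions {x>0, y>0}, {x<0, y>0}, {x<y<0}, {y<x<0}, and {x>0, y<0}. Then F₂ maps O into O and is an involution on O: F₂(F₂(x,y)) = (x,y) for all (x,y) ∈ O. Moreover, F₂ maps {x>0,y>0} onto {y<x<0}, maps {x<0,y>0} onto {x<y<0}, and maps {x>0,y<0} onto itself. The complement ℝ² \ O has Lebesgue measure zero. -/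
open MeasureTheory Set

/-- Region ①: x > 0, y > 0. -/
def R1 : Set (ℝ × ℝ) := {p | 0 < p.1 ∧ 0 < p.2}
/-- Region ②: x < 0, y > 0. -/
def R2 : Set (ℝ × ℝ) := {p | p.1 < 0 ∧ 0 < p.2}
/-- Region ③: x < y < 0. -/
def R3 : Set (ℝ × ℝ) := {p | p.1 < p.2 ∧ p.2 < 0}
/-- Region ④: y < x < 0. -/
def R4 : Set (ℝ × ℝ) := {p | p.2 < p.1 ∧ p.1 < 0}
/-- Region ⑤: x > 0, y < 0. -/
def R5 : Set (ℝ × ℝ) := {p | 0 < p.1 ∧ p.2 < 0}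

/-- The union of the five open regions. -/
def O : Set (ℝ × ℝ) := R1 ∪ R2 ∪ R3 ∪ R4 ∪ R5

theorem F2_on_R1 {x y : ℝ} (hx : 0 < x) (hy : 0 < y) : F2 (x, y) = (-y, -x - y) := by
  simp only [F2, min_eq_right hx.le, min_eq_right (lt_min hx hy).le, zero_sub]

theorem F2_on_R2 {x y : ℝ} (hx : x < 0) (hy : 0 < y) : F2 (x, y) = (x - y, -y) := by
  simp only [F2, min_eq_left hx.le, min_eq_left (hx.trans hy).le, sub_self, zero_sub]

theorem F2_on_R3 {x y : ℝ} (hx : x < y) (hy : y < 0) : F2 (x, y) = (x - y, -y) := by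
  simp only [F2, min_eq_left (hx.trans hy).le, min_eq_left hx.le, sub_self, zero_sub]

theorem F2_on_R4 {x y : ℝ} (hx : y < x) (hy : x < 0) : F2 (x, y) = (x - y, -x) := by
  simp only [F2, min_eq_left hy.le, min_eq_right hx.le, min_eq_left (hx.trans hy).le]
  ext <;> simp

theorem F2_on_R5 {x y : ℝ} (hx : 0 < x) (hy : y < 0) : F2 (x, y) = (-y, -x) := by
  simp only [F2, min_eq_right hx.le, min_eq_right (hy.trans hx).le, min_eq_left hy.le]
  ext <;> simp

theorem F2_maps : MapsTo F2 R1 R4 ∧ MapsTo F2 R2 R3 ∧ MapsTo F2 R3 R2 ∧ MapsTo F2 R4 R1 ∧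
    MapsTo F2 R5 R5 := by
  refine ⟨?_, ?_, ?_, ?_, ?_⟩ <;> rintro ⟨x, y⟩ ⟨h1, h2⟩ <;> dsimp only at h1 h2
  · rw [F2_on_R1 h1 h2]; constructor <;> dsimp only <;> linarith
  · rw [F2_on_R2 h1 h2]; constructor <;> dsimp only <;> linarith
  · rw [F2_on_R3 h1 h2]; constructor <;> dsimp only <;> linarith
  · rw [F2_on_R4 h1 h2]; constructor <;> dsimp only <;> linarith
  · rw [F2_on_R5 h1 h2]; constructor <;> dsimp only <;> linarith

theorem F2_invol : ∀ p ∈ O, F2 (F2 p) = p := by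
  rintro ⟨x, y⟩ ((((⟨h1, h2⟩ | ⟨h1, h2⟩) | ⟨h1, h2⟩) | ⟨h1, h2⟩) | ⟨h1, h2⟩) <;>
    dsimp only at h1 h2
  · rw [F2_on_R1 h1 h2, F2_on_R4 (by linarith) (by linarith)]; ext <;> dsimp only <;> ring
  · rw [F2_on_R2 h1 h2, F2_on_R3 (by linarith) (by linarith)]; ext <;> simp
  · rw [F2_on_R3 h1 h2, F2_on_R2 (by linarith) (by linarith)]; ext <;> simp
  · rw [F2_on_R4 h1 h2, F2_on_R1 (by linarith) (by linarith)]; ext <;> simp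
  · rw [F2_on_R5 h1 h2, F2_on_R5 (by linarith) (by linarith)]; ext <;> simp

theorem image_of_maps {A B : Set (ℝ × ℝ)} (hB : B ⊆ O) (h1 : MapsTo F2 A B)
    (h2 : MapsTo F2 B A) : F2 '' A = B :=
  Subset.antisymm h1.image_subset fun p hp => ⟨F2 p, h2 hp, F2_invol p (hB hp)⟩

theorem measurable_O : MeasurableSet O := by
  have a : Measurable fun p : ℝ × ℝ => p.1 := measurable_fst
  have b : Measurable fun p : ℝ × ℝ => p.2 := measurable_snd
  have c : Measurable fun _ : ℝ × ℝ => (0 : ℝ) := measurable_const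
  refine ((((?_ : MeasurableSet R1).union (?_ : MeasurableSet R2)).union
    (?_ : MeasurableSet R3)).union (?_ : MeasurableSet R4)).union (?_ : MeasurableSet R5)
  · exact (measurableSet_lt c a).inter (measurableSet_lt c b)
  · exact (measurableSet_lt a c).inter (measurableSet_lt c b)
  · exact (measurableSet_lt a b).inter (measurableSet_lt b c)
  · exact (measurableSet_lt b a).inter (measurableSet_lt a c)
  · exact (measurableSet_lt c a).inter (measurableSet_lt b c)

theorem volume_compl_O : volume Oᶜ = 0 := by
  rw [Measure.volume_eq_prod, Measure.measure_prod_null measurable_O.compl]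
  have h0 : ∀ᵐ x : ℝ, x ≠ 0 := by simp [ae_iff]
  filter_upwards [h0] with x hx
  refine measure_mono_null (t := {0, x}) ?_ ((Set.toFinite _).measure_zero _)
  intro y hy
  by_contra hn
  simp only [mem_insert_iff, mem_singleton_iff, not_or] at hn
  apply hy
  simp only [O, R1, R2, R3, R4, R5, mem_union, mem_ofPred_eq]
  rcases lt_or_gt_of_ne hx with h | h <;> rcases lt_or_gt_of_ne hn.1 with h' | h' <;>
    rcases lt_or_gt_of_ne hn.2 with h'' | h'' <;> simp [*]

theorem F2_involution_on_O :
    (∀ p ∈ O, F2 p ∈ O) ∧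
    (∀ p ∈ O, F2 (F2 p) = p) ∧
    F2 '' R1 = R4 ∧
    F2 '' R2 = R3 ∧
    F2 '' R5 = R5 ∧
    volume Oᶜ = 0 := by
  obtain ⟨m1, m2, m3, m4, m5⟩ := F2_maps
  refine ⟨?_, F2_invol, image_of_maps (fun p hp => Or.inl (Or.inr hp)) m1 m4,
    image_of_maps (fun p hp => Or.inl (Or.inl (Or.inr hp))) m2 m3,
    image_of_maps (fun p hp => Or.inr hp) m5 m5, volume_compl_O⟩
  rintro p ((((h | h) | h) | h) | h)
  · exact Or.inl (Or.inr (m1 h))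
  · exact Or.inl (Or.inl (Or.inr (m2 h)))
  · exact Or.inl (Or.inl (Or.inl (Or.inr (m3 h))))
  · exact Or.inl (Or.inl (Or.inl (Or.inl (m4 h))))
  · exact Or.inr (m5 h)
end

section
/- Let c₁, c₂ > 0 and let F₃(x,y) = (min{−x,y}, y + x − min{−x,y}). Then F₃ restricts to a bijection from [−c₁, c₂] × [−c₂, ∞) onto [−c₂, c₁] × [−c₁, ∞). -/
open Set

theorem F3_bijOn (c₁ c₂ : ℝ) (hc₁ : 0 < c₁) (hc₂ : 0 < c₂) :
    Set.BijOn F3 (Icc (-c₁) c₂ ×ˢ Ici (-c₂)) (Icc (-c₂) c₁ ×ˢ Ici (-c₁)) := by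
  have inv : ∀ p, F3 (F3 p) = p := by
    rintro ⟨x, y⟩
    simp only [F3, Prod.mk.injEq]
    grind
  have maps : ∀ a b : ℝ, MapsTo F3 (Icc (-a) b ×ˢ Ici (-b)) (Icc (-b) a ×ˢ Ici (-a)) := by
    rintro a b ⟨x, y⟩ h
    simp only [F3, mem_prod, mem_Icc, mem_Ici] at h ⊢
    grind
  exact ⟨maps c₁ c₂, fun p _ q _ h => by rw [← inv p, h, inv q],
    fun p hp => ⟨F3 p, maps c₂ c₁ hp, inv p⟩⟩
end

section
/- Let r_U, r_V, r_X, r_Y be real-valued functions with r_U, r_V twice-differentiable on (−∞,0), r_X, r_Y twice-differentiable on (0,∞), satisfying r_U(−y) + r_V(−x−y) = r_X(x) + r_Y(y) for all x > 0, y > 0. Then there exist real constants a₁, a₂, a₃ such that r_V(v) = a₁v + a₂ for all v < 0 and r_X(x) = −a₁x + a₃ for all x > 0. -/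
open Set

theorem al_region1_functional_equation
    (rU rV rX rY : ℝ → ℝ)
    (hU : ∀ t ∈ Iio (0 : ℝ), DifferentiableAt ℝ rU t ∧ DifferentiableAt ℝ (deriv rU) t)
    (hV : ∀ t ∈ Iio (0 : ℝ), DifferentiableAt ℝ rV t ∧ DifferentiableAt ℝ (deriv rV) t)
    (hX : ∀ t ∈ Ioi (0 : ℝ), DifferentiableAt ℝ rX t ∧ DifferentiableAt ℝ (deriv rX) t)
    (hY : ∀ t ∈ Ioi (0 : ℝ), DifferentiableAt ℝ rY t ∧ DifferentiableAt ℝ (deriv rY) t)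
    (heq : ∀ x y : ℝ, 0 < x → 0 < y → rU (-y) + rV (-x - y) = rX x + rY y) :
    ∃ a₁ a₂ a₃ : ℝ,
      (∀ v : ℝ, v < 0 → rV v = a₁ * v + a₂) ∧
      (∀ x : ℝ, 0 < x → rX x = -a₁ * x + a₃) := by
  have key : ∀ x y : ℝ, 0 < x → 0 < y → deriv rX x = - deriv rV (-x - y) := by
    intro x y hx hy
    have h1 : HasDerivAt rV (deriv rV (-x - y)) (-x - y) :=
      (hV (-x - y) (by simp only [mem_Iio]; linarith)).1.hasDerivAt
    have h0 : HasDerivAt (fun t : ℝ => -t - y) (-1) x :=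
      ((hasDerivAt_id x).neg).sub_const y
    have h2 : HasDerivAt (fun t : ℝ => rV (-t - y)) (deriv rV (-x - y) * (-1)) x :=
      HasDerivAt.comp x h1 h0
    have h3 : HasDerivAt (fun t : ℝ => rV (-t - y) + (rU (-y) - rY y))
        (deriv rV (-x - y) * (-1)) x := h2.add_const _
    have h4 : rX =ᶠ[nhds x] (fun t : ℝ => rV (-t - y) + (rU (-y) - rY y)) := by
      filter_upwards [Ioi_mem_nhds hx] with t ht
      have := heq t y ht hy
      linarith
    have h5 := (h3.congr_of_eventuallyEq h4).deriv
    linarith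
  have dX : ∀ x : ℝ, 0 < x → deriv rX x = deriv rX 1 := by
    intro x hx
    have e1 := key x 1 hx one_pos
    have e2 := key 1 x one_pos hx
    rw [show -x - 1 = -1 - x by ring] at e1
    rw [e1, e2]
  have dV : ∀ v : ℝ, v < 0 → deriv rV v = - deriv rX 1 := by
    intro v hv
    have e1 := key (-v / 2) (-v / 2) (by linarith) (by linarith)
    rw [dX _ (by linarith), show -(-v / 2) - -v / 2 = v by ring] at e1
    linarith
  have aff : ∀ (f : ℝ → ℝ) (c : ℝ) (s : Set ℝ), IsOpen s → IsPreconnected s →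
      (∀ t ∈ s, DifferentiableAt ℝ f t) → (∀ t ∈ s, deriv f t = c) →
      ∀ x ∈ s, ∀ y ∈ s, f x - c * x = f y - c * y := by
    intro f c s ho hp hd hc x hx y hy
    have hD : ∀ t ∈ s, HasDerivAt (fun t => f t - c * t) 0 t := by
      intro t ht
      have h1 := (hd t ht).hasDerivAt
      rw [hc t ht] at h1
      have h2 : HasDerivAt (fun t : ℝ => c * t) (c * 1) t := (hasDerivAt_id t).const_mul c
      have h3 : HasDerivAt (fun t => f t - c * t) (c - c * 1) t := h1.sub h2
      simpa using h3
    exact ho.is_const_of_deriv_eq_zero hp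
      (fun t ht => (hD t ht).differentiableAt.differentiableWithinAt)
      (fun t ht => (hD t ht).deriv) hx hy
  refine ⟨-deriv rX 1, rV (-1) - deriv rX 1, rX 1 - deriv rX 1, ?_, ?_⟩
  · intro v hv
    have := aff rV (-deriv rX 1) (Iio 0) isOpen_Iio isPreconnected_Iio
      (fun t ht => (hV t ht).1) dV v hv (-1) (by simp)
    linarith
  · intro x hx
    have := aff rX (deriv rX 1) (Ioi 0) isOpen_Ioi isPreconnected_Ioi
      (fun t ht => (hX t ht).1) dX x hx 1 (by simp)
    linarith
end
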